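/- arXiv:2406.10194 — 8 statements merged into one kernel-verified Lean document; each statement's English description precedes it below -/
import Mathlib

section
/- Reduced-state approximation bound (inequality (2.6)). For each σ_B ∈ Ω_B with p(σ_B) > 0 let ψ^{σ_B} : Ω_A × Ω_C → ℂ be the unit vector ψ^{σ_B}(a,c) := ψ(a,σ_B,c)/sqrt(p(σ_B)), where p(σ_B) := Σ_{a,c} |ψ(a,σ_B,c)|²; let λ(σ_B) denote the largest eigenvalue of ρ_A(ψ^{σ_B}) and let φ̂(σ_B) : Ω_A → ℂ be a unit eigenvector of ρ_A(ψ^{σ_B}) for the eigenvalue λ(σ_B). Define ρ̂_A := Σ_{σ_B : p(σ_B)>0} p(σ_B)·|φ̂(σ_B)⟩⟨φ̂(σ_B)|, i.e. the matrix with entries Σ_{σ_B} p(σ_B)·φ̂(σ_B)(a)·conj(φ̂(σ_B)(a')). Then ‖ρ_A(ψ) − ρ̂_A‖₁ ≤ 2·Σ_{σ_B : p(σ_B)>0} p(σ_B)·(1 − λ(σ_B)). -/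
/-!
Statement 2 (inequality (2.6)): reduced-state approximation bound.
-/

open Complex

namespace Stmt2

variable {ΩA ΩB ΩC : Type*} [Fintype ΩA] [Fintype ΩB] [Fintype ΩC]
  [DecidableEq ΩA] [Nonempty ΩA] [Nonempty ΩB] [Nonempty ΩC]

/-- buffer marginal `p(σ_B)` -/
noncomputable def pB (ψ : ΩA × ΩB × ΩC → ℂ) (b : ΩB) : ℝ :=
  ∑ a : ΩA, ∑ c : ΩC, Complex.normSq (ψ (a, b, c))

/-- reduced density matrix on `A` of a vector on a bipartite index set `Ω_A × R`. -/
noncomputable def rhoA {R : Type*} [Fintype R] (χ : ΩA × R → ℂ) : Matrix ΩA ΩA ℂ :=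
  Matrix.of fun a a' => ∑ r : R, χ (a, r) * (starRingEnd ℂ) (χ (a', r))

/-- the normalized conditioned vector `ψ^{σ_B}`. -/
noncomputable def psib (ψ : ΩA × ΩB × ΩC → ℂ) (b : ΩB) (x : ΩA × ΩC) : ℂ :=
  ψ (x.1, b, x.2) / (Real.sqrt (pB ψ b) : ℂ)

/-- trace norm of a Hermitian matrix: sum of absolute values of eigenvalues. -/
noncomputable def trNorm {n : Type*} [Fintype n] [DecidableEq n] (M : Matrix n n ℂ) : ℝ :=
  if h : M.IsHermitian then ∑ i, |h.eigenvalues i| else 0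

/-!
Conditioning on `b` gives `ρ_A = ∑ b, ρ_b` with `ρ_b = p(b) ρ_A(ψ^b)`. If `F_b` is the projection
onto a unit eigenvector of `ρ_b` for the eigenvalue `μ_b = p(b) λ_b`, then
`ρ_b - (tr ρ_b) F_b = (ρ_b - μ_b F_b) - (tr ρ_b - μ_b) F_b` is a difference of two positive
semidefinite matrices, each of trace `tr ρ_b - μ_b = p(b) (1 - λ_b)`. Summing over `b` keeps this
form, and `‖P - Q‖₁ ≤ tr P + tr Q` for positive semidefinite `P` and `Q`: in an eigenbasis of
`P - Q`, each eigenvalue is the difference of nonnegative diagonal entries of `P` and `Q`.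
-/

open Finset Matrix
open scoped ComplexOrder

section Matrix

variable {ι n R 𝕜 : Type*} [Fintype n]

theorem star_dotProduct_self_eq_sum_normSq (v : n → ℂ) :
    star v ⬝ᵥ v = ((∑ a, normSq (v a) : ℝ) : ℂ) := by
  simp only [dotProduct, Pi.star_apply, ofReal_sum, normSq_eq_conj_mul_self, starRingEnd_apply]

theorem trace_eq_sum_star_dotProduct_mulVec [RCLike 𝕜] [Fintype ι]
    (e : OrthonormalBasis ι 𝕜 (EuclideanSpace 𝕜 n)) (M : Matrix n n 𝕜) :
    M.trace = ∑ i, star (e i).ofLp ⬝ᵥ M *ᵥ (e i).ofLp := by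
  classical
  have htrace : (M.toLpLin 2 2).trace 𝕜 _ = M.trace := by
    rw [toLpLin_eq_toLin, trace_toLin_eq]
  rw [← htrace, LinearMap.trace_eq_sum_inner _ e]
  refine sum_congr rfl fun i _ ↦ ?_
  rw [EuclideanSpace.inner_eq_star_dotProduct, dotProduct_comm, ofLp_toLpLin, toLin'_apply]

theorem trNorm_sub_le_trace_add_trace [DecidableEq n] {P Q : Matrix n n ℂ}
    (hP : P.PosSemidef) (hQ : Q.PosSemidef) :
    trNorm (P - Q) ≤ P.trace.re + Q.trace.re := by
  have h : (P - Q).IsHermitian := hP.isHermitian.sub hQ.isHermitian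
  rw [trNorm, dif_pos h, trace_eq_sum_star_dotProduct_mulVec h.eigenvectorBasis P,
    trace_eq_sum_star_dotProduct_mulVec h.eigenvectorBasis Q, re_sum, re_sum, ← sum_add_distrib]
  refine sum_le_sum fun i _ ↦ ?_
  have hPi := hP.re_dotProduct_nonneg (h.eigenvectorBasis i).ofLp
  have hQi := hQ.re_dotProduct_nonneg (h.eigenvectorBasis i).ofLp
  rw [h.eigenvalues_eq, sub_mulVec, dotProduct_sub, map_sub]
  exact (abs_sub _ _).trans_eq (congrArg₂ (· + ·) (abs_of_nonneg hPi) (abs_of_nonneg hQi))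

theorem posSemidef_sub_smul_vecMulVec_of_mulVec_eq_smul [CommRing R] [PartialOrder R] [StarRing R]
    {ρ : Matrix n n R} (hρ : ρ.PosSemidef) {φ : n → R} {μ : R} (hφ : star φ ⬝ᵥ φ = 1)
    (hμ : ρ *ᵥ φ = μ • φ) :
    (ρ - μ • vecMulVec φ (star φ)).PosSemidef := by
  classical
  set F := vecMulVec φ (star φ) with hF
  have hFH : Fᴴ = F := by rw [hF, conjTranspose_vecMulVec, star_star]
  have hFF : F * F = F := by rw [hF, vecMulVec_mul_vecMulVec, hφ, one_smul]
  have hρF : ρ * F = μ • F := by rw [hF, mul_vecMulVec, hμ, smul_vecMulVec]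
  have hFρ : F * ρ = star μ • F := by
    rw [← hFH, ← hρ.isHermitian.eq, ← conjTranspose_mul, hρF, conjTranspose_smul]
  have hμF : star μ • F = μ • F :=
    calc star μ • F = F * ρ * F := by rw [hFρ, smul_mul_assoc, hFF]
      _ = μ • F := by rw [mul_assoc, hρF, mul_smul_comm, hFF]
  have hcompress : (1 - F)ᴴ * ρ * (1 - F) = ρ - μ • F := by
    rw [conjTranspose_sub, conjTranspose_one, hFH, sub_mul, one_mul, hFρ, hμF, mul_sub, mul_one,
      sub_mul, hρF, smul_mul_assoc, hFF, sub_self, sub_zero]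
  exact hcompress ▸ hρ.conjTranspose_mul_mul_same (1 - F)

theorem trNorm_sum_sub_trace_smul_vecMulVec_le [DecidableEq n] (s : Finset ι)
    {ρ : ι → Matrix n n ℂ} {φ : ι → n → ℂ} {μ : ι → ℂ} (hρ : ∀ i ∈ s, (ρ i).PosSemidef)
    (hφ : ∀ i ∈ s, star (φ i) ⬝ᵥ φ i = 1) (hμ : ∀ i ∈ s, ρ i *ᵥ φ i = μ i • φ i) :
    trNorm (∑ i ∈ s, (ρ i - (ρ i).trace • vecMulVec (φ i) (star (φ i)))) ≤
      2 * ∑ i ∈ s, ((ρ i).trace - μ i).re := by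
  set F : ι → Matrix n n ℂ := fun i ↦ vecMulVec (φ i) (star (φ i))
  have htraceF : ∀ i ∈ s, (F i).trace = 1 := fun i hi ↦ by
    rw [trace_vecMulVec, dotProduct_comm, hφ i hi]
  have hdefl : ∀ i ∈ s, (ρ i - μ i • F i).PosSemidef := fun i hi ↦
    posSemidef_sub_smul_vecMulVec_of_mulVec_eq_smul (hρ i hi) (hφ i hi) (hμ i hi)
  have htrace_defl : ∀ i ∈ s, (ρ i - μ i • F i).trace = (ρ i).trace - μ i := fun i hi ↦ by
    rw [trace_sub, trace_smul, htraceF i hi, smul_eq_mul, mul_one]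
  have hgap : ∀ i ∈ s, 0 ≤ (ρ i).trace - μ i := fun i hi ↦
    htrace_defl i hi ▸ (hdefl i hi).trace_nonneg
  have hsplit : ∑ i ∈ s, (ρ i - (ρ i).trace • F i) =
      ∑ i ∈ s, (ρ i - μ i • F i) - ∑ i ∈ s, ((ρ i).trace - μ i) • F i := by
    rw [← sum_sub_distrib]
    exact sum_congr rfl fun i _ ↦ by rw [sub_smul, sub_sub_sub_cancel_right]
  have htraceP : (∑ i ∈ s, (ρ i - μ i • F i)).trace = ∑ i ∈ s, ((ρ i).trace - μ i) := by
    rw [trace_sum, sum_congr rfl htrace_defl]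
  have htraceQ : (∑ i ∈ s, ((ρ i).trace - μ i) • F i).trace = ∑ i ∈ s, ((ρ i).trace - μ i) := by
    rw [trace_sum]
    exact sum_congr rfl fun i hi ↦ by rw [trace_smul, htraceF i hi, smul_eq_mul, mul_one]
  have hbound := trNorm_sub_le_trace_add_trace (posSemidef_sum s hdefl)
    (posSemidef_sum s fun i hi ↦ (posSemidef_vecMulVec_self_star (φ i)).smul (hgap i hi))
  rwa [← hsplit, htraceP, htraceQ, re_sum, ← two_mul] at hbound

end Matrix

section ReducedState

variable {α β γ R : Type*} [Fintype R]

theorem rhoA_eq_mul_conjTranspose (χ : α × R → ℂ) :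
    rhoA χ = (of fun a r ↦ χ (a, r)) * (of fun a r ↦ χ (a, r))ᴴ := by
  ext a a'
  simp only [rhoA, of_apply, mul_apply, conjTranspose_apply, starRingEnd_apply]

theorem posSemidef_rhoA [Finite α] (χ : α × R → ℂ) : (rhoA χ).PosSemidef := by
  rw [rhoA_eq_mul_conjTranspose]
  exact posSemidef_self_mul_conjTranspose _

theorem rhoA_smul (z : ℂ) (χ : α × R → ℂ) : rhoA (z • χ) = (normSq z : ℂ) • rhoA χ := by
  ext a a'
  simp only [rhoA, of_apply, Matrix.smul_apply, Pi.smul_apply, smul_eq_mul, map_mul, mul_sum]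
  exact sum_congr rfl fun r _ ↦ by rw [mul_mul_mul_comm, mul_conj]

/-- The unnormalized conditioned vector `ψ(·, b, ·)`, equal to `√p(b) ψ^b`, which avoids the
division by zero in `psib` at those `b` with `p(b) = 0`. -/
def condVec (ψ : α × β × γ → ℂ) (b : β) (x : α × γ) : ℂ :=
  ψ (x.1, b, x.2)

theorem rhoA_eq_sum_rhoA_condVec [Fintype β] [Fintype γ] (ψ : α × β × γ → ℂ) :
    rhoA ψ = ∑ b, rhoA (condVec ψ b) := by
  ext a a'
  simp only [rhoA, condVec, of_apply, Matrix.sum_apply, Fintype.sum_prod_type]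

variable [Fintype α] [Fintype γ]

theorem pB_nonneg (ψ : α × β × γ → ℂ) (b : β) : 0 ≤ pB ψ b :=
  sum_nonneg fun _ _ ↦ sum_nonneg fun _ _ ↦ normSq_nonneg _

theorem trace_rhoA_condVec (ψ : α × β × γ → ℂ) (b : β) :
    (rhoA (condVec ψ b)).trace = pB ψ b := by
  simp only [trace, diag_apply, rhoA, condVec, of_apply, pB, mul_conj, ofReal_sum]

theorem rhoA_condVec_eq_zero {ψ : α × β × γ → ℂ} {b : β} (hb : pB ψ b = 0) :
    rhoA (condVec ψ b) = 0 := by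
  rw [← (posSemidef_rhoA _).trace_eq_zero_iff, trace_rhoA_condVec, hb, ofReal_zero]

theorem rhoA_condVec_eq_smul_rhoA_psib (ψ : α × β × γ → ℂ) {b : β} (hb : 0 < pB ψ b) :
    rhoA (condVec ψ b) = (pB ψ b : ℂ) • rhoA (psib ψ b) := by
  have hsqrt : (√(pB ψ b) : ℂ) ≠ 0 := ofReal_ne_zero.mpr (Real.sqrt_pos.mpr hb).ne'
  have hcond : condVec ψ b = (√(pB ψ b) : ℂ) • psib ψ b :=
    funext fun _ ↦ (mul_div_cancel₀ _ hsqrt).symm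
  rw [hcond, rhoA_smul, normSq_ofReal, Real.mul_self_sqrt hb.le]

theorem rhoA_sub_of_sum_eq_sum_filter [Fintype β] (ψ : α × β × γ → ℂ) (φ : β → α → ℂ) :
    rhoA ψ - of (fun a a' ↦ ∑ b, (pB ψ b : ℂ) * (φ b a * starRingEnd ℂ (φ b a'))) =
      ∑ b with 0 < pB ψ b, (rhoA (condVec ψ b) -
        (rhoA (condVec ψ b)).trace • vecMulVec (φ b) (star (φ b))) := by
  have hvecMulVec : of (fun a a' ↦ ∑ b, (pB ψ b : ℂ) * (φ b a * starRingEnd ℂ (φ b a'))) =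
      ∑ b, (rhoA (condVec ψ b)).trace • vecMulVec (φ b) (star (φ b)) := by
    ext a a'
    simp only [of_apply, Matrix.sum_apply, Matrix.smul_apply, vecMulVec_apply, trace_rhoA_condVec,
      smul_eq_mul, Pi.star_apply, starRingEnd_apply]
  rw [rhoA_eq_sum_rhoA_condVec, hvecMulVec, ← sum_sub_distrib, sum_filter_of_ne]
  refine fun b _ hterm ↦ (pB_nonneg ψ b).lt_of_ne' fun hb ↦ hterm ?_
  rw [rhoA_condVec_eq_zero hb, trace_zero, zero_smul, sub_zero]

end ReducedState

theorem reduced_state_approx_general {α β γ : Type*} [Fintype α] [Fintype β] [Fintype γ]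
    [DecidableEq α] (ψ : α × β × γ → ℂ) (lam : β → ℝ) (phihat : β → α → ℂ)
    (hev : ∀ b, 0 < pB ψ b →
      ∑ a, normSq (phihat b a) = 1 ∧ rhoA (psib ψ b) *ᵥ phihat b = (lam b : ℂ) • phihat b) :
    trNorm (rhoA ψ -
        of fun a a' ↦ ∑ b, (pB ψ b : ℂ) * (phihat b a * starRingEnd ℂ (phihat b a'))) ≤
      2 * ∑ b, pB ψ b * (1 - lam b) := by
  have hsupport : ∀ b ∈ univ, pB ψ b * (1 - lam b) ≠ 0 → 0 < pB ψ b := fun b _ hb ↦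
    (pB_nonneg ψ b).lt_of_ne' (left_ne_zero_of_mul hb)
  rw [rhoA_sub_of_sum_eq_sum_filter, ← sum_filter_of_ne hsupport]
  refine (trNorm_sum_sub_trace_smul_vecMulVec_le (μ := fun b ↦ pB ψ b * lam b) _
    (fun b _ ↦ posSemidef_rhoA _) (fun b hb ↦ ?_) (fun b hb ↦ ?_)).trans_eq ?_
  · rw [star_dotProduct_self_eq_sum_normSq, (hev b (mem_filter.mp hb).2).1, ofReal_one]
  · have hb := (mem_filter.mp hb).2
    rw [rhoA_condVec_eq_smul_rhoA_psib ψ hb, smul_mulVec, (hev b hb).2, smul_smul]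
  · refine congrArg (2 * ·) (sum_congr rfl fun b _ ↦ ?_)
    rw [trace_rhoA_condVec, mul_one_sub, ← ofReal_mul, ← ofReal_sub, ofReal_re]

/-- **Inequality (2.6)**: `λ b` is the largest eigenvalue of `ρ_A(ψ^{σ_B})`,
with unit eigenvector `φ̂(σ_B)`; the maximality of `λ b` is expressed by the
Rayleigh-quotient bound. The sums over `σ_B` may be taken unrestricted since all
terms corresponding to `p(σ_B) = 0` carry the factor `p(σ_B)`. -/
theorem reduced_state_approx (ψ : ΩA × ΩB × ΩC → ℂ)
    (hψ : ∑ σ : ΩA × ΩB × ΩC, Complex.normSq (ψ σ) = 1)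
    (lam : ΩB → ℝ) (phihat : ΩB → ΩA → ℂ)
    (hev : ∀ b : ΩB, 0 < pB ψ b →
      (∑ a : ΩA, Complex.normSq (phihat b a) = 1) ∧
      (rhoA (psib ψ b)).mulVec (phihat b) = (lam b : ℂ) • phihat b ∧
      ∀ v : ΩA → ℂ,
        (∑ a : ΩA, ∑ a' : ΩA, (starRingEnd ℂ) (v a) * rhoA (psib ψ b) a a' * v a').re
          ≤ lam b * ∑ a : ΩA, Complex.normSq (v a)) :
    trNorm ((rhoA ψ : Matrix ΩA ΩA ℂ) -
        Matrix.of fun a a' =>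
          ∑ b : ΩB, (pB ψ b : ℂ) * (phihat b a * (starRingEnd ℂ) (phihat b a')))
      ≤ 2 * ∑ b : ΩB, pB ψ b * (1 - lam b) :=
  reduced_state_approx_general ψ lam phihat fun b hb ↦ ⟨(hev b hb).1, (hev b hb).2.1⟩

end Stmt2
end

section
/- Probabilistic half of the fidelity bound (first estimate in the proof of Theorem 3.1). Let p be a probability mass function on Ω_A × Ω_B × Ω_C. Then | Σ_{(σ_A,σ_B,σ_C) : p(σ_B,σ_C)>0} p(σ_B,σ_C) · sqrt(p(σ_A|σ_B,σ_C)) · ( sqrt(p(σ_A|σ_B,σ_C)) − sqrt(p(σ_A|σ_B)) ) | ≤ TV_B(A|C). -/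
/-!
Statement 3: probabilistic half of the fidelity bound (proof of Theorem 3.1).
-/

open scoped Classical

namespace Stmt3

variable {ΩA ΩB ΩC : Type*} [Fintype ΩA] [Fintype ΩB] [Fintype ΩC]
  [Nonempty ΩA] [Nonempty ΩB] [Nonempty ΩC]

/-- marginal `p(σ_B)` -/
noncomputable def pB (p : ΩA × ΩB × ΩC → ℝ) (b : ΩB) : ℝ :=
  ∑ a : ΩA, ∑ c : ΩC, p (a, b, c)

/-- marginal `p(σ_B, σ_C)` -/
noncomputable def pBC (p : ΩA × ΩB × ΩC → ℝ) (b : ΩB) (c : ΩC) : ℝ :=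
  ∑ a : ΩA, p (a, b, c)

/-- marginal `p(σ_A, σ_B)` -/
noncomputable def pAB (p : ΩA × ΩB × ΩC → ℝ) (a : ΩA) (b : ΩB) : ℝ :=
  ∑ c : ΩC, p (a, b, c)

/-- conditional probability `p(σ_A | σ_B)` (convention `x/0 = 0`). -/
noncomputable def condAB (p : ΩA × ΩB × ΩC → ℝ) (a : ΩA) (b : ΩB) : ℝ :=
  pAB p a b / pB p b

/-- conditional probability `p(σ_A | σ_B, σ_C)` -/
noncomputable def condABC (p : ΩA × ΩB × ΩC → ℝ) (a : ΩA) (b : ΩB) (c : ΩC) : ℝ :=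
  p (a, b, c) / pBC p b c

/-- `TV_B(A|C)` -/
noncomputable def TVB (p : ΩA × ΩB × ΩC → ℝ) : ℝ :=
  ∑ b : ΩB, ∑ c : ΩC, pBC p b c *
    ∑ a : ΩA, max (condABC p a b c - condAB p a b) 0

/-!
Write `s = √x`, `t = √y`. Pointwise, `(x - y) / 2 ≤ s (s - t) ≤ max (x - y) 0`: the lower bound is
`2 s t ≤ s² + t²`, and where `t ≤ s` the upper bound is `s (s - t) ≤ (s + t) (s - t)`.
Take `x = p(σ_A|σ_B,σ_C)` and `y = p(σ_A|σ_B)` and sum over `σ_A`. The lower bounds sum to a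
nonnegative number, since `x` has total mass `1` and `y` at most `1`, so the absolute value can be
dropped; the upper bounds sum to the integrand of the total variation.
-/

section SqrtEstimates

theorem sqrt_mul_sqrt_sub_sqrt_le_max {x y : ℝ} (hx : 0 ≤ x) (hy : 0 ≤ y) :
    √x * (√x - √y) ≤ max (x - y) 0 := by
  rcases le_total √x √y with hxy | hyx
  · exact le_max_of_le_right
      (mul_nonpos_of_nonneg_of_nonpos (Real.sqrt_nonneg x) (sub_nonpos.mpr hxy))
  · refine le_max_of_le_left ?_
    calc √x * (√x - √y) ≤ (√x + √y) * (√x - √y) :=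
          mul_le_mul_of_nonneg_right (le_add_of_nonneg_right (Real.sqrt_nonneg y))
            (sub_nonneg.mpr hyx)
      _ = x - y := by rw [← sq_sub_sq, Real.sq_sqrt hx, Real.sq_sqrt hy]

theorem half_sub_le_sqrt_mul_sqrt_sub_sqrt {x y : ℝ} (hx : 0 ≤ x) (hy : 0 ≤ y) :
    (x - y) / 2 ≤ √x * (√x - √y) := by
  have amgm : 2 * √x * √y ≤ x + y := by
    simpa only [Real.sq_sqrt hx, Real.sq_sqrt hy] using two_mul_le_add_sq √x √y
  linarith [Real.mul_self_sqrt hx]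

variable {ι : Type*} {s : Finset ι}

theorem sum_sqrt_mul_sqrt_sub_sqrt_le_sum_max {f g : ι → ℝ}
    (hf : ∀ i ∈ s, 0 ≤ f i) (hg : ∀ i ∈ s, 0 ≤ g i) :
    ∑ i ∈ s, √(f i) * (√(f i) - √(g i)) ≤ ∑ i ∈ s, max (f i - g i) 0 :=
  Finset.sum_le_sum fun i hi ↦ sqrt_mul_sqrt_sub_sqrt_le_max (hf i hi) (hg i hi)

theorem sum_sqrt_mul_sqrt_sub_sqrt_nonneg {f g : ι → ℝ}
    (hf : ∀ i ∈ s, 0 ≤ f i) (hg : ∀ i ∈ s, 0 ≤ g i) (hgf : ∑ i ∈ s, g i ≤ ∑ i ∈ s, f i) :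
    0 ≤ ∑ i ∈ s, √(f i) * (√(f i) - √(g i)) :=
  calc 0 ≤ (∑ i ∈ s, f i - ∑ i ∈ s, g i) / 2 := div_nonneg (sub_nonneg.mpr hgf) zero_le_two
    _ = ∑ i ∈ s, (f i - g i) / 2 := by rw [← Finset.sum_sub_distrib, Finset.sum_div]
    _ ≤ ∑ i ∈ s, √(f i) * (√(f i) - √(g i)) :=
      Finset.sum_le_sum fun i hi ↦ half_sub_le_sqrt_mul_sqrt_sub_sqrt (hf i hi) (hg i hi)

theorem sum_ite_pos_mul_mul {w : ℝ} (hw : 0 ≤ w) (f g : ι → ℝ) :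
    ∑ i ∈ s, (if 0 < w then w * f i * g i else 0) = w * ∑ i ∈ s, f i * g i := by
  rcases hw.eq_or_lt with rfl | hw
  · simp
  · simp only [if_pos hw, Finset.mul_sum, mul_assoc]

end SqrtEstimates

section Conditionals

variable {A B C : Type*} {p : A × B × C → ℝ}

theorem pBC_nonneg [Fintype A] (hp : ∀ σ, 0 ≤ p σ) (b : B) (c : C) : 0 ≤ pBC p b c :=
  Finset.sum_nonneg fun _ _ ↦ hp _

theorem condABC_nonneg [Fintype A] (hp : ∀ σ, 0 ≤ p σ) (a : A) (b : B) (c : C) :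
    0 ≤ condABC p a b c :=
  div_nonneg (hp _) (pBC_nonneg hp b c)

theorem condAB_nonneg [Fintype A] [Fintype C] (hp : ∀ σ, 0 ≤ p σ) (a : A) (b : B) :
    0 ≤ condAB p a b :=
  div_nonneg (Finset.sum_nonneg fun _ _ ↦ hp _)
    (Finset.sum_nonneg fun _ _ ↦ Finset.sum_nonneg fun _ _ ↦ hp _)

theorem sum_condABC [Fintype A] {b : B} {c : C} (h : pBC p b c ≠ 0) :
    ∑ a, condABC p a b c = 1 :=
  calc ∑ a, condABC p a b c = pBC p b c / pBC p b c := (Finset.sum_div ..).symm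
    _ = 1 := div_self h

-- The sum is `1`, except where `pB p b = 0`: there the convention `x / 0 = 0` makes it `0`.
theorem sum_condAB_le_one [Fintype A] [Fintype C] (p : A × B × C → ℝ) (b : B) :
    ∑ a, condAB p a b ≤ 1 :=
  calc ∑ a, condAB p a b = pB p b / pB p b := (Finset.sum_div ..).symm
    _ ≤ 1 := div_self_le_one _

theorem pBC_mul_sum_sqrt_condABC_mul_sub_nonneg [Fintype A] [Fintype C] (hp : ∀ σ, 0 ≤ p σ)
    (b : B) (c : C) :
    0 ≤ pBC p b c * ∑ a, √(condABC p a b c) * (√(condABC p a b c) - √(condAB p a b)) := by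
  rcases (pBC_nonneg hp b c).eq_or_lt with hzero | hpos
  · rw [← hzero, zero_mul]
  · have hmass : ∑ a, condAB p a b ≤ ∑ a, condABC p a b c :=
      (sum_condAB_le_one p b).trans_eq (sum_condABC hpos.ne').symm
    exact mul_nonneg hpos.le <| sum_sqrt_mul_sqrt_sub_sqrt_nonneg
      (fun a _ ↦ condABC_nonneg hp a b c) (fun a _ ↦ condAB_nonneg hp a b) hmass

theorem pBC_mul_sum_sqrt_condABC_mul_sub_le [Fintype A] [Fintype C] (hp : ∀ σ, 0 ≤ p σ)
    (b : B) (c : C) :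
    pBC p b c * ∑ a, √(condABC p a b c) * (√(condABC p a b c) - √(condAB p a b))
      ≤ pBC p b c * ∑ a, max (condABC p a b c - condAB p a b) 0 :=
  mul_le_mul_of_nonneg_left
    (sum_sqrt_mul_sqrt_sub_sqrt_le_sum_max
      (fun a _ ↦ condABC_nonneg hp a b c) (fun a _ ↦ condAB_nonneg hp a b))
    (pBC_nonneg hp b c)

theorem prob_half_fidelity_general [Fintype A] [Fintype B] [Fintype C] (hp : ∀ σ, 0 ≤ p σ) :
    ∑ b : B, ∑ c : C, ∑ a : A,
        (if 0 < pBC p b c then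
          pBC p b c * √(condABC p a b c) * (√(condABC p a b c) - √(condAB p a b))
        else 0)
      ∈ Set.Icc 0 (TVB p) := by
  simp only [sum_ite_pos_mul_mul (pBC_nonneg hp _ _)]
  exact ⟨Finset.sum_nonneg fun b _ ↦ Finset.sum_nonneg fun c _ ↦
      pBC_mul_sum_sqrt_condABC_mul_sub_nonneg hp b c,
    Finset.sum_le_sum fun b _ ↦ Finset.sum_le_sum fun c _ ↦
      pBC_mul_sum_sqrt_condABC_mul_sub_le hp b c⟩

end Conditionals

/-- **First estimate in the proof of Theorem 3.1**. -/
theorem prob_half_fidelity (p : ΩA × ΩB × ΩC → ℝ)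
    (hp0 : ∀ σ, 0 ≤ p σ) (hp1 : ∑ σ : ΩA × ΩB × ΩC, p σ = 1) :
    |∑ b : ΩB, ∑ c : ΩC, ∑ a : ΩA,
        (if 0 < pBC p b c then
          pBC p b c * Real.sqrt (condABC p a b c) *
            (Real.sqrt (condABC p a b c) - Real.sqrt (condAB p a b))
        else 0)|
      ≤ TVB p := by
  obtain ⟨hnonneg, hle⟩ := prob_half_fidelity_general hp0
  exact (abs_of_nonneg hnonneg).trans_le hle

end Stmt3
end

section
/- Spectral tail bound (Lemma of Section 4, inequality (4.5)). Let λ₁ ≥ λ₂ ≥ … ≥ λ_{|Ω_A|} be the eigenvalues of ρ_A(ψ) in decreasing order (with multiplicity), and for N ∈ ℕ define τ(N) := Σ_{j > N} λ_j. Then τ(|Ω_B|) ≤ 2·TV_B(A|C) + 2·ϑ_B(A|C). -/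
/-!
Statement 5 (Lemma of Section 4, inequality (4.5)): spectral tail bound.
-/

open Complex

namespace Stmt5

variable {ΩA ΩB ΩC : Type*} [Fintype ΩA] [Fintype ΩB] [Fintype ΩC]
  [DecidableEq ΩA] [Nonempty ΩA] [Nonempty ΩB] [Nonempty ΩC]

noncomputable def prob (ψ : ΩA × ΩB × ΩC → ℂ) (σ : ΩA × ΩB × ΩC) : ℝ :=
  Complex.normSq (ψ σ)

noncomputable def pB (ψ : ΩA × ΩB × ΩC → ℂ) (b : ΩB) : ℝ :=
  ∑ a : ΩA, ∑ c : ΩC, prob ψ (a, b, c)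

noncomputable def pBC (ψ : ΩA × ΩB × ΩC → ℂ) (b : ΩB) (c : ΩC) : ℝ :=
  ∑ a : ΩA, prob ψ (a, b, c)

noncomputable def pAB (ψ : ΩA × ΩB × ΩC → ℂ) (a : ΩA) (b : ΩB) : ℝ :=
  ∑ c : ΩC, prob ψ (a, b, c)

noncomputable def condAB (ψ : ΩA × ΩB × ΩC → ℂ) (a : ΩA) (b : ΩB) : ℝ :=
  pAB ψ a b / pB ψ b

noncomputable def condABC (ψ : ΩA × ΩB × ΩC → ℂ) (a : ΩA) (b : ΩB) (c : ΩC) : ℝ :=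
  prob ψ (a, b, c) / pBC ψ b c

/-- `TV_B(A|C)` -/
noncomputable def TVB (ψ : ΩA × ΩB × ΩC → ℂ) : ℝ :=
  ∑ b : ΩB, ∑ c : ΩC, pBC ψ b c *
    ∑ a : ΩA, max (condABC ψ a b c - condAB ψ a b) 0

noncomputable def varthetaAG (ψ : ΩA × ΩB × ΩC → ℂ)
    (α : ΩA × ΩB → ℝ) (γ : ΩC × ΩB → ℝ) : ℝ :=
  Real.sqrt (∑ σ : ΩA × ΩB × ΩC, prob ψ σ *
    Complex.normSq (1 - Complex.exp (Complex.I *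
      ((α (σ.1, σ.2.1) + γ (σ.2.2, σ.2.1) - Complex.arg (ψ σ) : ℝ) : ℂ))))

/-- `ϑ_B(A|C)` -/
noncomputable def vartheta (ψ : ΩA × ΩB × ΩC → ℂ) : ℝ :=
  ⨅ (α : ΩA × ΩB → ℝ) (γ : ΩC × ΩB → ℝ), varthetaAG ψ α γ

/-- reduced density matrix on `A` -/
noncomputable def rhoA (ψ : ΩA × ΩB × ΩC → ℂ) : Matrix ΩA ΩA ℂ :=
  Matrix.of fun a a' => ∑ b : ΩB, ∑ c : ΩC, ψ (a, b, c) * (starRingEnd ℂ) (ψ (a', b, c))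

/-! The sum of the eigenvalues of `ρ_A(ψ)` beyond the `N` largest is at most the squared distance
from `ψ` to any vector whose slices `ψ(·, b, c)` span at most `N` dimensions (Eckart–Young), so it
suffices to exhibit one such vector with `N = |Ω_B|`. Take the amplitude whose distribution is
`q(a, b, c) = p(b, c) p(a | b)` and whose phase is `α(a, b) + γ(c, b)`: its slices are multiples of
`|Ω_B|` vectors. With `δ` the phase difference of the two amplitudes at a point, the squared
distance there splits into the discrepancy of the moduli, `(√p - √q)² ≤ |p - q|`, which sums to
twice the total variation, and that of the phases, `√(p q) |1 - exp(i δ)|²`, which is at most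
`2 √q · √p |1 - exp(i δ)|` and hence sums to at most `2 ϑ` by Cauchy–Schwarz. -/

open scoped InnerProductSpace Matrix

section Bathtub

lemma sum_le_sum_mul_of_threshold {ι : Type*} [Fintype ι] {s : Finset ι} {lam w : ι → ℝ} {t : ℝ}
    (ht : 0 ≤ t) (hle : ∀ i ∈ s, lam i ≤ t) (hge : ∀ i ∉ s, t ≤ lam i)
    (hw₀ : ∀ i, 0 ≤ w i) (hw₁ : ∀ i, w i ≤ 1) (hw : (s.card : ℝ) ≤ ∑ i, w i) :
    ∑ i ∈ s, lam i ≤ ∑ i, lam i * w i := by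
  classical
  have hterm (i : ι) : t * (w i - if i ∈ s then 1 else 0) ≤
      lam i * w i - if i ∈ s then lam i else 0 := by
    split_ifs with hi
    · nlinarith [hle i hi, hw₁ i]
    · nlinarith [hge i hi, hw₀ i]
  have hsum := Finset.sum_le_sum fun i (_ : i ∈ Finset.univ) => hterm i
  rw [← Finset.mul_sum, Finset.sum_sub_distrib, Finset.sum_sub_distrib, Finset.sum_boole,
    Finset.sum_ite_mem, Finset.filter_univ_mem, Finset.univ_inter] at hsum
  linarith [mul_nonneg ht (sub_nonneg.2 hw)]

lemma card_filter_le_val_add_of_le {d N : ℕ} (hN : N ≤ d) :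
    (Finset.univ.filter fun j : Fin d => N ≤ j.val).card + N = d := by
  have hcompl := Finset.card_filter_add_card_filter_not (s := (Finset.univ : Finset (Fin d)))
    (fun j => N ≤ j.val)
  simpa only [not_le, Fin.card_filter_val_lt, min_eq_right hN, Finset.card_univ,
    Fintype.card_fin] using hcompl

lemma sum_tail_le_sum_mul {d N : ℕ} {lam w : Fin d → ℝ} (hlam : Antitone lam)
    (hlam₀ : ∀ j, 0 ≤ lam j) (hw₀ : ∀ j, 0 ≤ w j) (hw₁ : ∀ j, w j ≤ 1)
    (hw : (d : ℝ) ≤ ∑ j, w j + N) :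
    ∑ j with N ≤ (j : Fin d).val, lam j ≤ ∑ j, lam j * w j := by
  rcases Nat.lt_or_ge N d with hN | hN
  · refine sum_le_sum_mul_of_threshold (hlam₀ ⟨N, hN⟩) (fun j hj => ?_) (fun j hj => ?_) hw₀ hw₁ ?_
    · exact hlam (Fin.mk_le_of_le_val (Finset.mem_filter_univ j |>.1 hj))
    · exact hlam (Fin.le_def.2 (not_le.1 (mt (Finset.mem_filter_univ j).2 hj)).le)
    · have hcard : ((Finset.univ.filter fun j : Fin d => N ≤ j.val).card : ℝ) + N = d :=
        mod_cast card_filter_le_val_add_of_le hN.le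
      exact le_of_add_le_add_right (hcard.trans_le hw)
  · rw [Finset.filter_false_of_mem fun j _ => by omega, Finset.sum_empty]
    exact Finset.sum_nonneg fun j _ => mul_nonneg (hlam₀ j) (hw₀ j)

end Bathtub

section EckartYoung

variable {𝕜 E ι κ : Type*} [RCLike 𝕜] [NormedAddCommGroup E] [InnerProductSpace 𝕜 E]

lemma inner_starProjection_self (V : Submodule 𝕜 E) [V.HasOrthogonalProjection] (x : E) :
    ⟪x, V.starProjection x⟫_𝕜 = ((‖V.starProjection x‖ ^ 2 : ℝ) : 𝕜) := by
  rw [← V.starProjection_eq_self_iff.2 (V.starProjection_apply_mem x),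
    ← V.inner_starProjection_left_eq_right, V.starProjection_eq_self_iff.2
    (V.starProjection_apply_mem x), inner_self_eq_norm_sq_to_K, RCLike.ofReal_pow]

lemma sum_sq_norm_starProjection_eq_finrank [FiniteDimensional 𝕜 E] [Fintype κ]
    (u : OrthonormalBasis κ 𝕜 E) (V : Submodule 𝕜 E) :
    ∑ j, ‖V.starProjection (u j)‖ ^ 2 = Module.finrank 𝕜 V := by
  have hproj : LinearMap.IsProj V (V.starProjection : E →ₗ[𝕜] E) :=
    ⟨V.starProjection_apply_mem, fun _ => V.starProjection_eq_self_iff.2⟩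
  have htrace := hproj.trace
  simp only [LinearMap.trace_eq_sum_inner _ u, ContinuousLinearMap.coe_coe,
    inner_starProjection_self] at htrace
  exact_mod_cast htrace

lemma sum_tail_le_sum_mul_sq_norm_starProjection_orthogonal [FiniteDimensional 𝕜 E] {d N : ℕ}
    (u : OrthonormalBasis (Fin d) 𝕜 E) {lam : Fin d → ℝ} (hlam : Antitone lam)
    (hlam₀ : ∀ j, 0 ≤ lam j) {V : Submodule 𝕜 E} (hV : Module.finrank 𝕜 V ≤ N) :
    ∑ j with N ≤ (j : Fin d).val, lam j ≤ ∑ j, lam j * ‖Vᗮ.starProjection (u j)‖ ^ 2 := by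
  refine sum_tail_le_sum_mul hlam hlam₀ (fun j => sq_nonneg _) (fun j => ?_) ?_
  · exact pow_le_one₀ (norm_nonneg _)
      ((Vᗮ.norm_starProjection_apply_le (u j)).trans_eq (u.norm_eq_one j))
  · have hdim := V.finrank_add_finrank_orthogonal
    rw [Module.finrank_eq_card_basis u.toBasis, Fintype.card_fin] at hdim
    rw [sum_sq_norm_starProjection_eq_finrank, ← hdim, add_comm]
    exact_mod_cast Nat.add_le_add_left hV _

variable [Fintype ι]

variable (𝕜) in
/-- The frame operator `∑ i, |m i⟩⟨m i|` of a finite family of vectors; that of the slices of `ψ`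
is `ρ_A(ψ)`. -/
noncomputable def frameOperator (m : ι → E) : E →L[𝕜] E :=
  ∑ i, InnerProductSpace.rankOne 𝕜 (m i) (m i)

lemma isPositive_frameOperator (m : ι → E) : (frameOperator 𝕜 m).IsPositive :=
  ContinuousLinearMap.isPositive_sum _ fun i _ => InnerProductSpace.isPositive_rankOne_self (m i)

lemma trace_comp_frameOperator [FiniteDimensional 𝕜 E] (A : E →L[𝕜] E) (m : ι → E) :
    (A ∘L frameOperator 𝕜 m).trace 𝕜 E = ∑ i, ⟪m i, A (m i)⟫_𝕜 := by
  simp [frameOperator, ContinuousLinearMap.comp_finsetSum, InnerProductSpace.comp_rankOne,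
    ContinuousLinearMap.toLinearMap_sum, InnerProductSpace.trace_rankOne]

lemma eigenvalue_frameOperator_nonneg {m : ι → E} {x : E} {μ : ℝ} (hx : ‖x‖ = 1)
    (hμ : frameOperator 𝕜 m x = (μ : 𝕜) • x) : 0 ≤ μ := by
  have h := (isPositive_frameOperator (𝕜 := 𝕜) m).re_inner_nonneg_right x
  simpa [hμ, inner_smul_right, inner_self_eq_norm_sq_to_K, hx] using h

lemma sum_sq_norm_starProjection_eq_sum_eigenvalue_mul [FiniteDimensional 𝕜 E] [Fintype κ]
    {m : ι → E} (u : OrthonormalBasis κ 𝕜 E) {lam : κ → ℝ}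
    (hu : ∀ j, frameOperator 𝕜 m (u j) = (lam j : 𝕜) • u j) (V : Submodule 𝕜 E) :
    ∑ i, ‖V.starProjection (m i)‖ ^ 2 = ∑ j, lam j * ‖V.starProjection (u j)‖ ^ 2 := by
  have htrace := trace_comp_frameOperator V.starProjection m
  simp only [LinearMap.trace_eq_sum_inner _ u, ContinuousLinearMap.coe_coe,
    ContinuousLinearMap.comp_apply, hu, map_smul, inner_smul_right,
    inner_starProjection_self] at htrace
  exact_mod_cast htrace.symm

lemma sum_tail_eigenvalues_frameOperator_le [FiniteDimensional 𝕜 E] {d N : ℕ} {m : ι → E}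
    (u : OrthonormalBasis (Fin d) 𝕜 E) {lam : Fin d → ℝ} (hlam : Antitone lam)
    (hu : ∀ j, frameOperator 𝕜 m (u j) = (lam j : 𝕜) • u j) (f : ι → E)
    (hf : (Set.range f).finrank 𝕜 ≤ N) :
    ∑ j with N ≤ (j : Fin d).val, lam j ≤ ∑ i, ‖m i - f i‖ ^ 2 := by
  set V := Submodule.span 𝕜 (Set.range f)
  have hmem (i : ι) : f i ∈ V := Submodule.subset_span ⟨i, rfl⟩
  calc ∑ j with N ≤ (j : Fin d).val, lam j
      ≤ ∑ j, lam j * ‖Vᗮ.starProjection (u j)‖ ^ 2 :=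
        sum_tail_le_sum_mul_sq_norm_starProjection_orthogonal u hlam
          (fun j => eigenvalue_frameOperator_nonneg (u.norm_eq_one j) (hu j)) hf
    _ = ∑ i, ‖Vᗮ.starProjection (m i)‖ ^ 2 :=
        (sum_sq_norm_starProjection_eq_sum_eigenvalue_mul u hu Vᗮ).symm
    _ = ∑ i, ‖Vᗮ.starProjection (m i - f i)‖ ^ 2 := by
        simp only [map_sub, V.starProjection_orthogonal_apply_eq_zero (hmem _), sub_zero]
    _ ≤ ∑ i, ‖m i - f i‖ ^ 2 := by
        gcongr
        exact Vᗮ.norm_starProjection_apply_le _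

end EckartYoung

lemma finrank_range_smul_comp_le_card {R M ι κ : Type*} [Ring R] [StrongRankCondition R]
    [AddCommGroup M] [Module R M] [Fintype κ] (r : ι → R) (v : κ → M) (g : ι → κ) :
    (Set.range fun i => r i • v (g i)).finrank R ≤ Fintype.card κ := by
  have hspan : Submodule.span R (Set.range fun i => r i • v (g i)) ≤
      Submodule.span R (Set.range v) := by
    rw [Submodule.span_le, Set.range_subset_iff]
    exact fun i => Submodule.smul_mem _ _ (Submodule.subset_span ⟨g i, rfl⟩)
  have := Module.Finite.span_of_finite R (Set.finite_range v)
  exact (Submodule.finrank_mono hspan).trans (finrank_range_le_card v)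

section PolarForm

lemma norm_smul_sub_smul_sq {F : Type*} [NormedAddCommGroup F] [InnerProductSpace ℝ F] {x y : F}
    (hx : ‖x‖ = 1) (hy : ‖y‖ = 1) (r s : ℝ) :
    ‖r • x - s • y‖ ^ 2 = (r - s) ^ 2 + r * s * ‖x - y‖ ^ 2 := by
  rw [norm_sub_sq_real, norm_sub_sq_real, norm_smul, norm_smul, mul_pow, mul_pow,
    real_inner_smul_left, real_inner_smul_right, hx, hy, Real.norm_eq_abs, Real.norm_eq_abs,
    sq_abs, sq_abs]
  ring

lemma sub_sq_le_abs_sq_sub_sq {r s : ℝ} (hr : 0 ≤ r) (hs : 0 ≤ s) :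
    (r - s) ^ 2 ≤ |r ^ 2 - s ^ 2| := by
  have hsub : |r - s| ≤ |r + s| := abs_le_abs (by linarith) (by linarith)
  rw [sq_sub_sq, abs_mul, ← sq_abs, sq]
  exact mul_le_mul_of_nonneg_right hsub (abs_nonneg _)

lemma norm_smul_sub_smul_sq_le {F : Type*} [NormedAddCommGroup F] [InnerProductSpace ℝ F]
    {x y : F} (hx : ‖x‖ = 1) (hy : ‖y‖ = 1) {r s : ℝ} (hr : 0 ≤ r) (hs : 0 ≤ s) :
    ‖r • x - s • y‖ ^ 2 ≤ |r ^ 2 - s ^ 2| + 2 * (s * (r * ‖x - y‖)) := by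
  have hxy : ‖x - y‖ ≤ 2 := (norm_sub_le x y).trans_eq (by rw [hx, hy]; norm_num)
  rw [norm_smul_sub_smul_sq hx hy]
  refine add_le_add (sub_sq_le_abs_sq_sub_sq hr hs) ?_
  calc r * s * ‖x - y‖ ^ 2 = r * s * ‖x - y‖ * ‖x - y‖ := by ring
    _ ≤ r * s * ‖x - y‖ * 2 := by gcongr
    _ = 2 * (s * (r * ‖x - y‖)) := by ring

lemma norm_sub_sqrt_mul_exp_sq_le (w : ℂ) {q : ℝ} (hq : 0 ≤ q) (t : ℝ) :
    ‖w - √q * exp (I * t)‖ ^ 2 ≤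
      |normSq w - q| + 2 * (√q * (‖w‖ * ‖1 - exp (I * ((t - arg w : ℝ) : ℂ))‖)) := by
  have hpolar : w - √q * exp (I * t) = ‖w‖ • exp (I * arg w) - √q • exp (I * t) := by
    rw [real_smul, real_smul, mul_comm I (arg w : ℂ), norm_mul_exp_arg_mul_I]
  have hphase : ‖exp (I * arg w) - exp (I * t)‖ = ‖1 - exp (I * ((t - arg w : ℝ) : ℂ))‖ := by
    rw [← one_mul ‖1 - _‖, ← norm_exp_I_mul_ofReal (arg w), ← norm_mul, mul_sub, mul_one,
      ← exp_add, ← mul_add, ← ofReal_add, add_sub_cancel]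
  have h := norm_smul_sub_smul_sq_le (norm_exp_I_mul_ofReal (arg w)) (norm_exp_I_mul_ofReal t)
    (norm_nonneg w) (Real.sqrt_nonneg q)
  rwa [← hpolar, hphase, ← normSq_eq_norm_sq w, Real.sq_sqrt hq] at h

end PolarForm

section MarkovState

variable {A B C : Type*} (ψ : A × B × C → ℂ)

lemma prob_nonneg (σ : A × B × C) : 0 ≤ prob ψ σ := normSq_nonneg _

variable [Fintype A]

lemma pBC_nonneg (b : B) (c : C) : 0 ≤ pBC ψ b c :=
  Finset.sum_nonneg fun _ _ => prob_nonneg ψ _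

lemma pBC_mul_condABC (a : A) (b : B) (c : C) : pBC ψ b c * condABC ψ a b c = prob ψ (a, b, c) := by
  refine mul_div_cancel_of_imp' fun h => ?_
  exact (Finset.sum_eq_zero_iff_of_nonneg fun a _ => prob_nonneg ψ (a, b, c)).1 h a
    (Finset.mem_univ a)

variable [Fintype C]

lemma pB_eq_sum_pBC (b : B) : pB ψ b = ∑ c, pBC ψ b c :=
  Finset.sum_comm

lemma condAB_nonneg (a : A) (b : B) : 0 ≤ condAB ψ a b :=
  div_nonneg (Finset.sum_nonneg fun _ _ => prob_nonneg ψ _)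
    (Finset.sum_nonneg fun _ _ => Finset.sum_nonneg fun _ _ => prob_nonneg ψ _)

lemma sum_condAB_eq_one {b : B} (hb : pB ψ b ≠ 0) : ∑ a, condAB ψ a b = 1 := by
  simp only [condAB, ← Finset.sum_div]
  exact div_self hb

/-- The distribution `p(b, c) p(a | b)`: it has the `BC`-marginal of `p`, and under it `A` and `C`
are conditionally independent given `B`. -/
noncomputable def markovProb (σ : A × B × C) : ℝ :=
  pBC ψ σ.2.1 σ.2.2 * condAB ψ σ.1 σ.2.1

lemma markovProb_nonneg (σ : A × B × C) : 0 ≤ markovProb ψ σ :=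
  mul_nonneg (pBC_nonneg ψ _ _) (condAB_nonneg ψ _ _)

lemma sum_markovProb_left (b : B) (c : C) : ∑ a, markovProb ψ (a, b, c) = pBC ψ b c := by
  simp only [markovProb, ← Finset.mul_sum]
  by_cases hb : pB ψ b = 0
  · rw [pB_eq_sum_pBC, Finset.sum_eq_zero_iff_of_nonneg fun c _ => pBC_nonneg ψ b c] at hb
    rw [hb c (Finset.mem_univ c), zero_mul]
  · rw [sum_condAB_eq_one ψ hb, mul_one]

/-- The amplitude with distribution `markovProb ψ` and phase `α(a, b) + γ(c, b)`, to which `ψ` is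
compared. -/
noncomputable def markovState (α : A × B → ℝ) (γ : C × B → ℝ) (σ : A × B × C) : ℂ :=
  √(markovProb ψ σ) * exp (I * ((α (σ.1, σ.2.1) + γ (σ.2.2, σ.2.1) : ℝ) : ℂ))

variable [Fintype B]

lemma sum_markovProb : ∑ σ, markovProb ψ σ = ∑ σ, prob ψ σ := by
  simp only [Fintype.sum_prod_type_right, sum_markovProb_left, pBC]

lemma TVB_eq_sum_max : TVB ψ = ∑ σ, max (prob ψ σ - markovProb ψ σ) 0 := by
  rw [Fintype.sum_prod_type_right, Fintype.sum_prod_type]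
  simp only [TVB, Finset.mul_sum, mul_max_of_nonneg _ _ (pBC_nonneg ψ _ _), mul_sub,
    pBC_mul_condABC, mul_zero, markovProb]

lemma sum_abs_prob_sub_markovProb : ∑ σ, |prob ψ σ - markovProb ψ σ| = 2 * TVB ψ := by
  have habs (x : ℝ) : |x| = 2 * max x 0 - x := by
    linarith [max_zero_add_max_neg_zero_eq_abs_self x, max_zero_sub_max_neg_zero_eq_self x]
  simp only [habs, Finset.sum_sub_distrib, ← Finset.mul_sum, ← TVB_eq_sum_max, sum_markovProb,
    sub_self, sub_zero]

lemma sum_sqrt_markovProb_mul_le (α : A × B → ℝ) (γ : C × B → ℝ) :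
    ∑ σ, √(markovProb ψ σ) * (‖ψ σ‖ *
        ‖1 - exp (I * ((α (σ.1, σ.2.1) + γ (σ.2.2, σ.2.1) - arg (ψ σ) : ℝ) : ℂ))‖) ≤
      √(∑ σ, prob ψ σ) * varthetaAG ψ α γ := by
  refine (Real.sum_mul_le_sqrt_mul_sqrt _ _ _).trans_eq ?_
  simp only [Real.sq_sqrt (markovProb_nonneg ψ _), sum_markovProb, mul_pow, ← normSq_eq_norm_sq,
    varthetaAG, prob]

lemma sum_norm_sub_markovState_sq_le (α : A × B → ℝ) (γ : C × B → ℝ) :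
    ∑ σ, ‖ψ σ - markovState ψ α γ σ‖ ^ 2 ≤
      2 * TVB ψ + 2 * (√(∑ σ, prob ψ σ) * varthetaAG ψ α γ) := by
  refine (Finset.sum_le_sum fun σ _ =>
    norm_sub_sqrt_mul_exp_sq_le (ψ σ) (markovProb_nonneg ψ σ) _).trans ?_
  rw [Finset.sum_add_distrib, ← Finset.mul_sum]
  exact add_le_add (sum_abs_prob_sub_markovProb ψ).le
    (mul_le_mul_of_nonneg_left (sum_sqrt_markovProb_mul_le ψ α γ) zero_le_two)

lemma le_mul_vartheta {s t : ℝ} (hs : 0 ≤ s) (h : ∀ α γ, t ≤ s * varthetaAG ψ α γ) :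
    t ≤ s * vartheta ψ := by
  simp only [vartheta, Real.mul_iInf_of_nonneg hs]
  exact le_ciInf fun α => le_ciInf fun γ => h α γ

end MarkovState

section Slices

variable {A B C : Type*}

/-- The slice `ψ(·, b, c)` as a vector of the Hilbert space of `A`, indexed by the pair `(b, c)`. -/
noncomputable def slice (ψ : A × B × C → ℂ) (i : B × C) : EuclideanSpace ℂ A :=
  WithLp.toLp 2 fun a => ψ (a, i)

variable [Fintype A] [Fintype C]

lemma slice_markovState (ψ : A × B × C → ℂ) (α : A × B → ℝ) (γ : C × B → ℝ) (i : B × C) :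
    slice (markovState ψ α γ) i = (√(pBC ψ i.1 i.2) * exp (I * γ (i.2, i.1))) •
      WithLp.toLp 2 fun a => √(condAB ψ a i.1) * exp (I * α (a, i.1)) := by
  ext a
  simp only [slice, markovState, markovProb, Real.sqrt_mul (pBC_nonneg ψ _ _), ofReal_mul,
    ofReal_add, mul_add, exp_add, PiLp.smul_apply, smul_eq_mul]
  ring

variable [Fintype B]

lemma finrank_range_slice_markovState_le (ψ : A × B × C → ℂ) (α : A × B → ℝ) (γ : C × B → ℝ) :
    (Set.range (slice (markovState ψ α γ))).finrank ℂ ≤ Fintype.card B := by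
  rw [funext (slice_markovState ψ α γ)]
  exact finrank_range_smul_comp_le_card _
    (fun b => WithLp.toLp 2 fun a => (√(condAB ψ a b) * exp (I * α (a, b)) : ℂ)) Prod.fst

lemma sum_norm_slice_sub_sq (ψ φ : A × B × C → ℂ) :
    ∑ i, ‖slice ψ i - slice φ i‖ ^ 2 = ∑ σ, ‖ψ σ - φ σ‖ ^ 2 := by
  simp only [EuclideanSpace.norm_sq_eq, PiLp.sub_apply, slice,
    Fintype.sum_prod_type_right (α₁ := A)]

lemma frameOperator_slice_apply (ψ : A × B × C → ℂ) (x : EuclideanSpace ℂ A) :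
    frameOperator ℂ (slice ψ) x = WithLp.toLp 2 (rhoA ψ *ᵥ x.ofLp) := by
  have hrhoA (a a' : A) : rhoA ψ a a' = ∑ i, ψ (a, i) * (starRingEnd ℂ) (ψ (a', i)) := by
    rw [Fintype.sum_prod_type]
    rfl
  ext a
  simp only [frameOperator, sum_apply, InnerProductSpace.rankOne_apply, WithLp.ofLp_sum,
    Finset.sum_apply, PiLp.smul_apply, smul_eq_mul, PiLp.inner_apply, RCLike.inner_apply, slice,
    Matrix.mulVec, dotProduct, hrhoA, Finset.sum_mul]
  rw [Finset.sum_comm]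
  refine Finset.sum_congr rfl fun a' _ => Finset.sum_congr rfl fun i _ => ?_
  ring

lemma sum_tail_eigenvalues_rhoA_le [DecidableEq A] (ψ φ : A × B × C → ℂ)
    (hH : (rhoA ψ).IsHermitian) {d N : ℕ} (e : Fin d ≃ A)
    (hsort : Antitone fun j => hH.eigenvalues (e j))
    (hφ : (Set.range (slice φ)).finrank ℂ ≤ N) :
    ∑ j with N ≤ (j : Fin d).val, hH.eigenvalues (e j) ≤ ∑ σ, ‖ψ σ - φ σ‖ ^ 2 := by
  have heigen (j : Fin d) : frameOperator ℂ (slice ψ) (hH.eigenvectorBasis.reindex e.symm j) =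
      (hH.eigenvalues (e j) : ℂ) • hH.eigenvectorBasis.reindex e.symm j := by
    rw [OrthonormalBasis.reindex_apply, Equiv.symm_symm, frameOperator_slice_apply,
      hH.mulVec_eigenvectorBasis]
    rfl
  exact (sum_tail_eigenvalues_frameOperator_le _ hsort heigen _ hφ).trans_eq
    (sum_norm_slice_sub_sq ψ φ)

end Slices

theorem spectral_tail_bound_general {A B C : Type*} [Fintype A] [Fintype B] [Fintype C]
    [DecidableEq A] (ψ : A × B × C → ℂ) (hH : (rhoA ψ).IsHermitian) {d : ℕ} (e : Fin d ≃ A)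
    (hsort : Antitone fun j => hH.eigenvalues (e j)) :
    ∑ j with Fintype.card B ≤ (j : Fin d).val, hH.eigenvalues (e j) ≤
      2 * TVB ψ + 2 * (√(∑ σ, prob ψ σ) * vartheta ψ) := by
  have htail (α : A × B → ℝ) (γ : C × B → ℝ) := (sum_tail_eigenvalues_rhoA_le ψ
    (markovState ψ α γ) hH e hsort (finrank_range_slice_markovState_le ψ α γ)).trans
    (sum_norm_sub_markovState_sq_le ψ α γ)
  have hinf := le_mul_vartheta ψ (Real.sqrt_nonneg (∑ σ, prob ψ σ))
    (t := (∑ j with Fintype.card B ≤ (j : Fin d).val, hH.eigenvalues (e j) - 2 * TVB ψ) / 2)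
    fun α γ => by linarith [htail α γ]
  linarith

/-- **Inequality (4.5)**: the eigenvalues of `ρ_A(ψ)` are enumerated in
decreasing order by `e : Fin |Ω_A| ≃ Ω_A`; the tail beyond the `|Ω_B|` largest
eigenvalues is bounded by `2·TV_B(A|C) + 2·ϑ_B(A|C)`. -/
theorem spectral_tail_bound (ψ : ΩA × ΩB × ΩC → ℂ)
    (hψ : ∑ σ : ΩA × ΩB × ΩC, Complex.normSq (ψ σ) = 1)
    (hH : (rhoA ψ).IsHermitian)
    (e : Fin (Fintype.card ΩA) ≃ ΩA)
    (hsort : ∀ i j : Fin (Fintype.card ΩA), i ≤ j →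
      hH.eigenvalues (e j) ≤ hH.eigenvalues (e i)) :
    ∑ j ∈ Finset.univ.filter (fun j : Fin (Fintype.card ΩA) => Fintype.card ΩB ≤ (j : ℕ)),
        hH.eigenvalues (e j)
      ≤ 2 * TVB ψ + 2 * vartheta ψ := by
  simpa only [prob, hψ, Real.sqrt_one, one_mul] using
    spectral_tail_bound_general ψ hH e fun i j => hsort i j

end Stmt5
end

section
/- Single-scale entanglement bound (Theorem 4.2). Fix d ≥ 1, ν ≥ 2, regularity constants 0 < c_d ≤ C_d, and constants ξ, C_ξ, α ∈ (0,∞). Then there exists a constant C < ∞, depending only on d, ν, c_d, C_d, ξ, C_ξ, α, such that the following holds: for every finite W ⊆ ℤ^d, every unit vector ψ : Ω₀^W → ℂ, and every regular nonempty A ⊆ W with L(A) ≥ 2 for which TV_{B_l(A)}(A|C_l(A)) + ϑ_{B_l(A)}(A|C_l(A)) ≤ C_ξ · L(A)^{2α} · exp(−l/ξ) holds for every integer l ≥ 1, one has S(ρ_A(ψ)) ≤ C · |∂A| · ln L(A). -/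
/-!
Statement 6 (Theorem 4.2): single-scale entanglement bound.
-/

open Complex
open scoped Classical

namespace Stmt6

/-- ℓ¹-distance on `ℤ^d`. -/
def dist1 {d : ℕ} (u v : Fin d → ℤ) : ℕ := ∑ i, (u i - v i).natAbs

/-- distance between two finite subsets of `ℤ^d` (junk value `0` if one is empty). -/
noncomputable def fdist {d : ℕ} (S T : Finset (Fin d → ℤ)) : ℕ :=
  if h : (S ×ˢ T).Nonempty then (S ×ˢ T).inf' h fun p => dist1 p.1 p.2 else 0

/-- the boundary `∂A = {u ∈ A : d(u, W∖A) = 1}`. -/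
noncomputable def bdry {d : ℕ} (W A : Finset (Fin d → ℤ)) : Finset (Fin d → ℤ) :=
  A.filter fun u => fdist {u} (W \ A) = 1

/-- the buffer `B_l(A) = {u ∈ W∖A : d(u,A) ≤ l}`. -/
noncomputable def buf {d : ℕ} (W A : Finset (Fin d → ℤ)) (l : ℕ) : Finset (Fin d → ℤ) :=
  (W \ A).filter fun u => fdist {u} A ≤ l

/-- the complement `C_l(A) = W ∖ (A ∪ B_l(A))`. -/
noncomputable def com {d : ℕ} (W A : Finset (Fin d → ℤ)) (l : ℕ) : Finset (Fin d → ℤ) :=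
  W \ (A ∪ buf W A l)

/-- the length `L(A) = |A| / (c_d · |∂A|)`. -/
noncomputable def lenA {d : ℕ} (W A : Finset (Fin d → ℤ)) (cd : ℝ) : ℝ :=
  (A.card : ℝ) / (cd * (bdry W A).card)

/-- regularity of `A ⊆ W`. -/
noncomputable def regular {d : ℕ} (W A : Finset (Fin d → ℤ)) (cd Cd : ℝ) : Prop :=
  A.Nonempty ∧ ∀ l : ℕ, 1 ≤ l → (l : ℝ) ≤ lenA W A cd →
    cd * l * (bdry W A).card ≤ ((buf W A l).card : ℝ) ∧
    ((buf W A l).card : ℝ) ≤ Cd * l * (bdry W A).card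

variable {d : ℕ} {Ω₀ : Type*} [Fintype Ω₀] [DecidableEq Ω₀] [Nonempty Ω₀]

/-- restriction of a configuration on `W` to a subset `D ⊆ W`
(junk value on points outside `W`, which never occur when `D ⊆ W`). -/
noncomputable def resv {W : Finset (Fin d → ℤ)} (D : Finset (Fin d → ℤ))
    (σ : {x // x ∈ W} → Ω₀) (x : {y // y ∈ D}) : Ω₀ :=
  if h : (x : Fin d → ℤ) ∈ W then σ ⟨x, h⟩ else Classical.arbitrary Ω₀

/-- marginal `p(σ_D)` of a weight function `p` on configurations of `W`. -/
noncomputable def marg {W : Finset (Fin d → ℤ)} (p : ({x // x ∈ W} → Ω₀) → ℝ)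
    (D : Finset (Fin d → ℤ)) (σD : {y // y ∈ D} → Ω₀) : ℝ :=
  ∑ σ : {x // x ∈ W} → Ω₀, if resv D σ = σD then p σ else 0

/-- joint marginal `p(σ_D, σ_E)`. -/
noncomputable def marg2 {W : Finset (Fin d → ℤ)} (p : ({x // x ∈ W} → Ω₀) → ℝ)
    (D E : Finset (Fin d → ℤ)) (σD : {y // y ∈ D} → Ω₀) (σE : {y // y ∈ E} → Ω₀) : ℝ :=
  ∑ σ : {x // x ∈ W} → Ω₀, if resv D σ = σD ∧ resv E σ = σE then p σ else 0

/-- triple joint marginal `p(σ_D, σ_E, σ_F)`. -/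
noncomputable def marg3 {W : Finset (Fin d → ℤ)} (p : ({x // x ∈ W} → Ω₀) → ℝ)
    (D E F : Finset (Fin d → ℤ)) (σD : {y // y ∈ D} → Ω₀) (σE : {y // y ∈ E} → Ω₀)
    (σF : {y // y ∈ F} → Ω₀) : ℝ :=
  ∑ σ : {x // x ∈ W} → Ω₀,
    if resv D σ = σD ∧ resv E σ = σE ∧ resv F σ = σF then p σ else 0

/-- `TV_B(A|C)` (conventions: terms with vanishing marginals drop out). -/
noncomputable def TVcond {W : Finset (Fin d → ℤ)} (p : ({x // x ∈ W} → Ω₀) → ℝ)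
    (A B C : Finset (Fin d → ℤ)) : ℝ :=
  ∑ σB : {y // y ∈ B} → Ω₀, ∑ σC : {y // y ∈ C} → Ω₀, marg2 p B C σB σC *
    ∑ σA : {y // y ∈ A} → Ω₀,
      max (marg3 p A B C σA σB σC / marg2 p B C σB σC
            - marg2 p A B σA σB / marg p B σB) 0

/-- the quantity `ϑ` before optimization over phase functions. -/
noncomputable def thAG {W : Finset (Fin d → ℤ)} (ψ : ({x // x ∈ W} → Ω₀) → ℂ)
    (A B C : Finset (Fin d → ℤ))
    (α : ({y // y ∈ A} → Ω₀) × ({y // y ∈ B} → Ω₀) → ℝ)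
    (γ : ({y // y ∈ C} → Ω₀) × ({y // y ∈ B} → Ω₀) → ℝ) : ℝ :=
  Real.sqrt (∑ σ : {x // x ∈ W} → Ω₀, Complex.normSq (ψ σ) *
    Complex.normSq (1 - Complex.exp (Complex.I *
      ((α (resv A σ, resv B σ) + γ (resv C σ, resv B σ) - Complex.arg (ψ σ) : ℝ) : ℂ))))

/-- `ϑ_B(A|C)`, optimized over phase functions. -/
noncomputable def th {W : Finset (Fin d → ℤ)} (ψ : ({x // x ∈ W} → Ω₀) → ℂ)
    (A B C : Finset (Fin d → ℤ)) : ℝ :=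
  ⨅ (α : ({y // y ∈ A} → Ω₀) × ({y // y ∈ B} → Ω₀) → ℝ)
    (γ : ({y // y ∈ C} → Ω₀) × ({y // y ∈ B} → Ω₀) → ℝ), thAG ψ A B C α γ

/-- gluing a configuration on `D` with one on `W ∖ D`. -/
noncomputable def glue {W D : Finset (Fin d → ℤ)} (hD : D ⊆ W)
    (σD : {y // y ∈ D} → Ω₀) (τ : {y // y ∈ W \ D} → Ω₀) (x : {x // x ∈ W}) : Ω₀ :=
  if h : (x : Fin d → ℤ) ∈ D then σD ⟨x, h⟩
  else τ ⟨x, Finset.mem_sdiff.mpr ⟨x.2, h⟩⟩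

/-- reduced density matrix of `ψ` on `D ⊆ W`. -/
noncomputable def rhoD {W D : Finset (Fin d → ℤ)} (hD : D ⊆ W)
    (ψ : ({x // x ∈ W} → Ω₀) → ℂ) :
    Matrix ({y // y ∈ D} → Ω₀) ({y // y ∈ D} → Ω₀) ℂ :=
  Matrix.of fun σD σD' => ∑ τ : {y // y ∈ W \ D} → Ω₀,
    ψ (glue hD σD τ) * (starRingEnd ℂ) (ψ (glue hD σD' τ))

/-- von Neumann entropy of a Hermitian matrix. -/
noncomputable def vN {n : Type*} [Fintype n] [DecidableEq n] (M : Matrix n n ℂ) : ℝ :=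
  if h : M.IsHermitian then -∑ i, h.eigenvalues i * Real.log (h.eigenvalues i) else 0

/-!
Cutting `W = A ⊔ B ⊔ C` along a buffer `B`, the state `ψ` is compared with the product
`u(σ_A, σ_B) v(σ_B, σ_C)`, where `u = √p(σ_A|σ_B) exp(iα)` and `v = √p(σ_B, σ_C) exp(iγ)`. As a
matrix from configurations on `B ⊔ C` to configurations on `A`, this product has rank at most
`|Ω₀^B|`. Let `P` be the projection onto its range. Gibbs' inequality, applied separately to the
parts of the spectrum of `ρ_A` seen by `P` and by `1 - P`, bounds the entropy by
`1 + ln |Ω₀^B| + ε ln |Ω₀^A|` with `ε = ‖ψ - u v‖²`. The Hellinger distance is controlled by total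
variation, so `ε` is controlled by `TV_B(A|C) + ϑ_B(A|C)`.

For a buffer of width `l = O(ln L(A))` the error term is `O(|∂A|)`, while regularity gives
`|B| = O(l |∂A|)`. If this `l` exceeds `L(A)`, then `|A| = c_d L(A) |∂A| ≤ c_d l |∂A|`, and the
trivial bound `S(ρ_A) ≤ |A| ln ν` suffices.
-/

section Entropy

theorem mul_negMulLog_le {x r : ℝ} (hx : 0 ≤ x) (hr : 0 ≤ r) :
    r * Real.negMulLog x ≤ r * x * Real.log r + 1 - r * x := by
  have h := Real.negMulLog_le_one_sub_self (mul_nonneg hr hx)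
  rw [Real.negMulLog_mul, Real.negMulLog] at h
  linarith

/- The weights `q` are the expectations of an effect in an eigenbasis, whose total `r` then plays
the role of the number of outcomes; `q = 1` is the maximal entropy bound. -/
theorem sum_mul_negMulLog_le {ι : Type*} {s : Finset ι} {q x : ι → ℝ} {r : ℝ} (hr : 0 < r)
    (hx : ∀ i ∈ s, 0 ≤ x i) (hq : ∀ i ∈ s, 0 ≤ q i) (hqr : ∑ i ∈ s, q i ≤ r) :
    ∑ i ∈ s, q i * Real.negMulLog (x i) ≤
      (∑ i ∈ s, q i * x i) * Real.log r + 1 - ∑ i ∈ s, q i * x i := by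
  have hterm : ∀ i ∈ s, r * (q i * Real.negMulLog (x i)) ≤
      r * (q i * x i) * Real.log r + q i - r * (q i * x i) := fun i hi => by
    linarith [mul_le_mul_of_nonneg_left (mul_negMulLog_le (hx i hi) hr.le) (hq i hi)]
  have hsum := Finset.sum_le_sum hterm
  simp only [Finset.sum_sub_distrib, Finset.sum_add_distrib, ← Finset.sum_mul,
    ← Finset.mul_sum] at hsum
  refine le_of_mul_le_mul_left (hsum.trans ?_) hr
  linarith

end Entropy

section Projection

open Matrix

variable {𝕜 n m k : Type*} [RCLike 𝕜] [Fintype n] [Fintype m] [Fintype k]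

theorem trace_mul_conjTranspose_self (M : Matrix n m 𝕜) :
    (M * Mᴴ).trace = ((∑ i, ∑ j, ‖M i j‖ ^ 2 : ℝ) : 𝕜) := by
  simp [Matrix.trace, Matrix.mul_apply, RCLike.mul_conj]

theorem trace_mul_mul_conjTranspose_of_isStarProjection {P : Matrix n n 𝕜}
    (hP : IsStarProjection P) (M : Matrix n m 𝕜) :
    (P * (M * Mᴴ)).trace = ((∑ i, ∑ j, ‖(P * M) i j‖ ^ 2 : ℝ) : 𝕜) := by
  have hself : Pᴴ = P := hP.isSelfAdjoint
  calc (P * (M * Mᴴ)).trace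
    _ = (P * P * (M * Mᴴ)).trace := by rw [hP.isIdempotentElem.eq]
    _ = ((P * M) * (P * M)ᴴ).trace := by
      rw [conjTranspose_mul, hself, Matrix.mul_assoc, trace_mul_comm]
      simp only [Matrix.mul_assoc]
    _ = _ := trace_mul_conjTranspose_self _

theorem exists_isStarProjection_mul_eq_self (F : Matrix n k 𝕜) :
    ∃ P : Matrix n n 𝕜, IsStarProjection P ∧ P * F = F ∧ RCLike.re P.trace ≤ Fintype.card k := by
  classical
  let col : k → EuclideanSpace 𝕜 n := fun j => WithLp.toLp 2 (F.col j)
  let V := Submodule.span 𝕜 (Set.range col)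
  let e := toEuclideanCLM (n := n) (𝕜 := 𝕜)
  let P : Matrix n n 𝕜 := e.symm V.starProjection
  have hPV : e P = V.starProjection := e.apply_symm_apply _
  have htrace : P.trace = Module.finrank 𝕜 V := by
    have hproj : LinearMap.IsProj V (V.starProjection : EuclideanSpace 𝕜 n →ₗ[𝕜] _) :=
      ⟨V.starProjection_apply_mem, fun _ => Submodule.starProjection_eq_self_iff.mpr⟩
    rw [← hproj.trace, ← hPV, coe_toEuclideanCLM_eq_toEuclideanLin, toEuclideanLin,
      toLpLin_eq_toLin, trace_toLin_eq]
  refine ⟨P, isStarProjection_starProjection.map e.symm.toStarAlgHom, ?_, ?_⟩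
  · ext i j
    have hcol : V.starProjection (col j) = col j :=
      Submodule.starProjection_eq_self_iff.mpr (Submodule.subset_span ⟨j, rfl⟩)
    rw [← hPV, toEuclideanCLM_toLp] at hcol
    exact congrArg (· i) hcol
  · rw [htrace, RCLike.natCast_re]
    exact_mod_cast finrank_range_le_card col

theorem sum_norm_sq_isStarProjection_mul_le {P : Matrix n n 𝕜} (hP : IsStarProjection P)
    (M : Matrix n m 𝕜) : ∑ i, ∑ j, ‖(P * M) i j‖ ^ 2 ≤ ∑ i, ∑ j, ‖M i j‖ ^ 2 := by
  classical
  have pythagoras : ∑ i, ∑ j, ‖M i j‖ ^ 2 =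
      ∑ i, ∑ j, ‖(P * M) i j‖ ^ 2 + ∑ i, ∑ j, ‖((1 - P) * M : Matrix n m 𝕜) i j‖ ^ 2 := by
    rw [← RCLike.ofReal_inj (K := 𝕜), RCLike.ofReal_add, ← trace_mul_conjTranspose_self,
      ← trace_mul_mul_conjTranspose_of_isStarProjection hP,
      ← trace_mul_mul_conjTranspose_of_isStarProjection hP.one_sub,
      ← Matrix.trace_add, ← Matrix.add_mul, add_sub_cancel, Matrix.one_mul]
  rw [pythagoras]
  exact le_add_of_nonneg_right (by positivity)

theorem re_trace_one_sub_mul_le [DecidableEq n] {P : Matrix n n 𝕜} (hP : IsStarProjection P)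
    {F : Matrix n k 𝕜} (hF : P * F = F) (H : Matrix k m 𝕜) (M : Matrix n m 𝕜) :
    RCLike.re ((1 - P) * (M * Mᴴ)).trace ≤ ∑ i, ∑ j, ‖(M - F * H) i j‖ ^ 2 := by
  have hker : (1 - P) * M = (1 - P) * (M - F * H) := by
    simp [Matrix.mul_sub, Matrix.sub_mul, ← Matrix.mul_assoc, hF]
  rw [trace_mul_mul_conjTranspose_of_isStarProjection hP.one_sub, RCLike.ofReal_re, hker]
  exact sum_norm_sq_isStarProjection_mul_le hP.one_sub _

end Projection

section VonNeumann

open Matrix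
open scoped ComplexOrder MatrixOrder

variable {𝕜 n : Type*} [RCLike 𝕜] [Fintype n]

theorem nonempty_of_trace_eq_one {ρ : Matrix n n 𝕜} (htr : ρ.trace = 1) : Nonempty n := by
  by_contra h
  rw [not_nonempty_iff] at h
  simp [Matrix.trace] at htr

variable [DecidableEq n]

/-- The expectation `⟨uᵢ, Q uᵢ⟩` of the observable `Q` in the `i`-th eigenvector `uᵢ` of the
Hermitian matrix `ρ`. -/
noncomputable def eigenExpectation {ρ : Matrix n n 𝕜} (hρ : ρ.IsHermitian) (Q : Matrix n n 𝕜)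
    (i : n) : ℝ :=
  RCLike.re ((star (hρ.eigenvectorUnitary : Matrix n n 𝕜) * Q * hρ.eigenvectorUnitary) i i)

variable {ρ : Matrix n n 𝕜} (hρ : ρ.IsHermitian) (Q : Matrix n n 𝕜)

theorem eigenExpectation_nonneg {Q : Matrix n n 𝕜} (hQ : Q.PosSemidef) (i : n) :
    0 ≤ eigenExpectation hρ Q i :=
  (RCLike.nonneg_iff.mp (hQ.conjTranspose_mul_mul_same _).diag_nonneg).1

theorem eigenExpectation_one_sub (i : n) :
    eigenExpectation hρ (1 - Q) i = 1 - eigenExpectation hρ Q i := by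
  simp [eigenExpectation, Matrix.mul_sub, Matrix.sub_mul]

theorem sum_eigenExpectation : ∑ i, eigenExpectation hρ Q i = RCLike.re Q.trace := by
  have htrace : (star (hρ.eigenvectorUnitary : Matrix n n 𝕜) * Q * hρ.eigenvectorUnitary).trace
      = Q.trace := by
    rw [trace_mul_comm, ← Matrix.mul_assoc,
      Unitary.mul_star_self_of_mem hρ.eigenvectorUnitary.2, Matrix.one_mul]
  rw [← htrace, Matrix.trace, map_sum]
  rfl

theorem sum_eigenExpectation_mul_eigenvalues :
    ∑ i, eigenExpectation hρ Q i * hρ.eigenvalues i = RCLike.re (Q * ρ).trace := by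
  set U : Matrix n n 𝕜 := ↑hρ.eigenvectorUnitary with hU
  have htrace : (Q * ρ).trace =
      (star U * Q * U * diagonal (RCLike.ofReal ∘ hρ.eigenvalues)).trace := by
    conv_lhs => rw [hρ.spectral_theorem, Unitary.conjStarAlgAut_apply, ← hU]
    rw [← Matrix.mul_assoc, trace_mul_comm]
    simp only [Matrix.mul_assoc]
  rw [htrace, Matrix.trace, map_sum]
  simp [eigenExpectation, mul_diagonal, ← hU]

theorem vN_eq_sum_negMulLog {ρ : Matrix n n ℂ} (hρ : ρ.IsHermitian) :
    vN ρ = ∑ i, Real.negMulLog (hρ.eigenvalues i) := by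
  simp [vN, hρ, Real.negMulLog]

theorem sum_eigenvalues_eq_one {ρ : Matrix n n 𝕜} (hρ : ρ.IsHermitian) (htr : ρ.trace = 1) :
    ∑ i, hρ.eigenvalues i = 1 := by
  rw [hρ.trace_eq_sum_eigenvalues] at htr
  exact_mod_cast htr

variable {ρ : Matrix n n ℂ}

theorem vN_le_log_card (hρ : ρ.PosSemidef) (htr : ρ.trace = 1) :
    vN ρ ≤ Real.log (Fintype.card n) := by
  have := nonempty_of_trace_eq_one htr
  have h := sum_mul_negMulLog_le (s := Finset.univ) (q := 1) (r := Fintype.card n)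
    (x := hρ.isHermitian.eigenvalues) (by exact_mod_cast Fintype.card_pos)
    (fun i _ => hρ.eigenvalues_nonneg i) (by simp) (by simp)
  simpa [vN_eq_sum_negMulLog hρ.isHermitian, sum_eigenvalues_eq_one hρ.isHermitian htr] using h

theorem vN_le_one_add_trace_mul_log (hρ : ρ.PosSemidef) (htr : ρ.trace = 1) {Q : Matrix n n ℂ}
    (hQ : Q.PosSemidef) (hQ' : (1 - Q).PosSemidef) {r : ℝ} (hr : 0 < r) (hQr : Q.trace.re ≤ r) :
    vN ρ ≤ 1 + (Q * ρ).trace.re * Real.log r +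
      ((1 - Q) * ρ).trace.re * Real.log (Fintype.card n) := by
  have := nonempty_of_trace_eq_one htr
  have hherm := hρ.isHermitian
  have htraceQ : ((1 - Q).trace).re ≤ Fintype.card n := by
    have := (RCLike.nonneg_iff.mp hQ.trace_nonneg).1
    simpa [Matrix.trace_sub] using this
  have hsplit : vN ρ = ∑ i, eigenExpectation hherm Q i * Real.negMulLog (hherm.eigenvalues i) +
      ∑ i, eigenExpectation hherm (1 - Q) i * Real.negMulLog (hherm.eigenvalues i) := by
    simp [vN_eq_sum_negMulLog hherm, eigenExpectation_one_sub, sub_mul]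
  have htotal : (Q * ρ).trace.re + ((1 - Q) * ρ).trace.re = 1 := by
    rw [← Complex.add_re, ← Matrix.trace_add, ← Matrix.add_mul, add_sub_cancel, Matrix.one_mul,
      htr, Complex.one_re]
  have gibbs {R : Matrix n n ℂ} (hR : R.PosSemidef) {s : ℝ} (hs : 0 < s) (hRs : R.trace.re ≤ s) :
      ∑ i, eigenExpectation hherm R i * Real.negMulLog (hherm.eigenvalues i) ≤
        (R * ρ).trace.re * Real.log s + 1 - (R * ρ).trace.re := by
    have h := sum_mul_negMulLog_le (s := Finset.univ) hs (fun i _ => hρ.eigenvalues_nonneg i)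
      (fun i _ => eigenExpectation_nonneg hherm hR i) (by rwa [sum_eigenExpectation])
    rwa [sum_eigenExpectation_mul_eigenvalues] at h
  linarith [gibbs hQ hr hQr, gibbs hQ' (by exact_mod_cast Fintype.card_pos) htraceQ]

theorem vN_mul_conjTranspose_le_log_card {m : Type*} [Fintype m] {M : Matrix n m ℂ}
    (hM : ∑ i, ∑ j, ‖M i j‖ ^ 2 = 1) : vN (M * Mᴴ) ≤ Real.log (Fintype.card n) :=
  vN_le_log_card (posSemidef_self_mul_conjTranspose M)
    (by rw [trace_mul_conjTranspose_self, hM, RCLike.ofReal_one])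

theorem vN_mul_conjTranspose_le {m k : Type*} [Fintype m] [Fintype k] [Nonempty k]
    {M : Matrix n m ℂ} (hM : ∑ i, ∑ j, ‖M i j‖ ^ 2 = 1) (F : Matrix n k ℂ) (H : Matrix k m ℂ) :
    vN (M * Mᴴ) ≤ 1 + Real.log (Fintype.card k) +
      (∑ i, ∑ j, ‖(M - F * H) i j‖ ^ 2) * Real.log (Fintype.card n) := by
  obtain ⟨P, hP, hPF, hPk⟩ := exists_isStarProjection_mul_eq_self F
  have htr : (M * Mᴴ).trace = 1 := by rw [trace_mul_conjTranspose_self, hM, RCLike.ofReal_one]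
  have hin : (P * (M * Mᴴ)).trace.re ≤ 1 := by
    rw [trace_mul_mul_conjTranspose_of_isStarProjection hP, ← hM]
    exact sum_norm_sq_isStarProjection_mul_le hP M
  have hout : ((1 - P) * (M * Mᴴ)).trace.re ≤ ∑ i, ∑ j, ‖(M - F * H) i j‖ ^ 2 :=
    re_trace_one_sub_mul_le hP hPF H M
  calc vN (M * Mᴴ)
    _ ≤ 1 + (P * (M * Mᴴ)).trace.re * Real.log (Fintype.card k) +
        ((1 - P) * (M * Mᴴ)).trace.re * Real.log (Fintype.card n) :=
      vN_le_one_add_trace_mul_log (posSemidef_self_mul_conjTranspose M) htr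
        hP.nonneg.posSemidef hP.one_sub.nonneg.posSemidef
        (by exact_mod_cast Fintype.card_pos) hPk
    _ ≤ 1 + 1 * Real.log (Fintype.card k) +
        (∑ i, ∑ j, ‖(M - F * H) i j‖ ^ 2) * Real.log (Fintype.card n) := by
      gcongr
    _ = _ := by rw [one_mul]

end VonNeumann

section Hellinger

theorem sq_sqrt_sub_sqrt_le_abs {x y : ℝ} (hx : 0 ≤ x) (hy : 0 ≤ y) :
    (√x - √y) ^ 2 ≤ |x - y| := by
  calc (√x - √y) ^ 2
    _ = |√x - √y| * |√x - √y| := by rw [abs_mul_abs_self, sq]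
    _ ≤ |√x - √y| * (√x + √y) := by
      gcongr
      exact abs_sub_le_iff.mpr ⟨by linarith [Real.sqrt_nonneg y], by linarith [Real.sqrt_nonneg x]⟩
    _ = |x - y| := by
      rw [← abs_of_nonneg (a := √x + √y) (by positivity), ← abs_mul]
      congr 1
      linear_combination Real.sq_sqrt hx - Real.sq_sqrt hy

theorem sum_sq_sqrt_sub_sqrt_le {ι : Type*} {s : Finset ι} {p q : ι → ℝ}
    (hp : ∀ i ∈ s, 0 ≤ p i) (hq : ∀ i ∈ s, 0 ≤ q i) (hpq : ∑ i ∈ s, p i = ∑ i ∈ s, q i) :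
    ∑ i ∈ s, (√(p i) - √(q i)) ^ 2 ≤ 2 * ∑ i ∈ s, max (p i - q i) 0 := by
  calc ∑ i ∈ s, (√(p i) - √(q i)) ^ 2
    _ ≤ ∑ i ∈ s, |p i - q i| :=
      Finset.sum_le_sum fun i hi => sq_sqrt_sub_sqrt_le_abs (hp i hi) (hq i hi)
    _ = ∑ i ∈ s, (2 * max (p i - q i) 0 - (p i - q i)) :=
      Finset.sum_congr rfl fun i _ => by
        rcases le_total (p i - q i) 0 with h | h
        · rw [abs_of_nonpos h, max_eq_right h]; ring
        · rw [abs_of_nonneg h, max_eq_left h]; ring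
    _ = 2 * ∑ i ∈ s, max (p i - q i) 0 := by
      rw [Finset.sum_sub_distrib, Finset.sum_sub_distrib, hpq, Finset.mul_sum]; ring

end Hellinger

section Markov

variable {α β γ : Type*} [Fintype α] [Fintype γ]

/-- The Markov approximation `p(a|b) p(b,c)` of a weight function `p(a,b,c)`, with value `0`
where `p(b) = 0`. -/
noncomputable def markovApprox (p : α → β → γ → ℝ) (a : α) (b : β) (c : γ) : ℝ :=
  (∑ z, p a b z) / (∑ x, ∑ z, p x b z) * ∑ x, p x b c

/-- The total variation distance between a weight function and its Markov approximation. -/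
noncomputable def markovDefect [Fintype β] (p : α → β → γ → ℝ) : ℝ :=
  ∑ a, ∑ b, ∑ c, max (p a b c - markovApprox p a b c) 0

theorem sum_markovApprox (p : α → β → γ → ℝ) (b : β) :
    ∑ a, ∑ c, markovApprox p a b c = ∑ a, ∑ c, p a b c := by
  simp only [markovApprox, ← Finset.mul_sum, ← Finset.sum_mul, ← Finset.sum_div]
  rw [Finset.sum_comm (f := fun c a' => p a' b c)]
  rcases eq_or_ne (∑ a, ∑ c, p a b c) 0 with h | h
  · rw [h, mul_zero]
  · rw [div_self h, one_mul]

variable {p : α → β → γ → ℝ}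

theorem markovApprox_nonneg (hp : ∀ a b c, 0 ≤ p a b c) (a : α) (b : β) (c : γ) :
    0 ≤ markovApprox p a b c :=
  mul_nonneg (div_nonneg (Finset.sum_nonneg fun _ _ => hp _ _ _)
    (Finset.sum_nonneg fun _ _ => Finset.sum_nonneg fun _ _ => hp _ _ _))
    (Finset.sum_nonneg fun _ _ => hp _ _ _)

theorem mul_max_conditional_sub_eq (hp : ∀ a b c, 0 ≤ p a b c) (a : α) (b : β) (c : γ) :
    (∑ a', p a' b c) * max (p a b c / (∑ a', p a' b c) -
      (∑ c', p a b c') / (∑ a', ∑ c', p a' b c')) 0 = max (p a b c - markovApprox p a b c) 0 := by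
  have hsum : 0 ≤ ∑ a', p a' b c := Finset.sum_nonneg fun _ _ => hp _ _ _
  have hcancel : (∑ a', p a' b c) * (p a b c / ∑ a', p a' b c) = p a b c :=
    mul_div_cancel_of_imp' fun h =>
      (Finset.sum_eq_zero_iff_of_nonneg fun _ _ => hp _ _ _).mp h a (Finset.mem_univ a)
  rw [mul_max_of_nonneg _ _ hsum, mul_sub, hcancel, mul_zero, markovApprox, mul_comm (∑ a', _)]

theorem sum_sq_sqrt_sub_sqrt_markovApprox_le [Fintype β] (hp : ∀ a b c, 0 ≤ p a b c) :
    ∑ a, ∑ b, ∑ c, (√(p a b c) - √(markovApprox p a b c)) ^ 2 ≤ 2 * markovDefect p := by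
  have h := sum_sq_sqrt_sub_sqrt_le (s := Finset.univ) (p := fun i : β × α × γ => p i.2.1 i.1 i.2.2)
    (q := fun i => markovApprox p i.2.1 i.1 i.2.2) (fun _ _ => hp _ _ _)
    (fun _ _ => markovApprox_nonneg hp _ _ _)
    (by simp only [Fintype.sum_prod_type, sum_markovApprox])
  simp only [Fintype.sum_prod_type] at h
  rw [markovDefect, Finset.sum_comm]
  exact h.trans_eq (by rw [Finset.sum_comm])

end Markov

section Phase

theorem norm_one_sub_exp_I_mul_le (t : ℝ) : ‖1 - exp (I * t)‖ ≤ 2 := by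
  have h := norm_sub_le 1 (exp (I * t))
  rw [norm_exp_I_mul_ofReal, norm_one] at h
  linarith

theorem norm_sub_mul_exp_sq_le (z : ℂ) (s t : ℝ) :
    ‖z - s * exp (I * t)‖ ^ 2 ≤
      2 * (‖z‖ ^ 2 * ‖1 - exp (I * (t - z.arg : ℝ))‖ ^ 2) + 2 * (‖z‖ - s) ^ 2 := by
  have hrot : z * exp (I * (t - z.arg : ℝ)) = ‖z‖ * exp (I * t) := by
    calc z * exp (I * (t - z.arg : ℝ))
      _ = ‖z‖ * exp (z.arg * I) * exp (I * (t - z.arg : ℝ)) := by rw [norm_mul_exp_arg_mul_I]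
      _ = ‖z‖ * exp (I * t) := by
        rw [mul_assoc, ← exp_add]
        push_cast
        ring_nf
  have hsplit : z - s * exp (I * t) =
      z * (1 - exp (I * (t - z.arg : ℝ))) + (‖z‖ - s : ℝ) * exp (I * t) := by
    rw [mul_sub, hrot]
    push_cast
    ring
  have htri : ‖z - s * exp (I * t)‖ ≤ ‖z‖ * ‖1 - exp (I * (t - z.arg : ℝ))‖ + |‖z‖ - s| := by
    have h := norm_add_le (z * (1 - exp (I * (t - z.arg : ℝ)))) ((‖z‖ - s : ℝ) * exp (I * t))
    rwa [← hsplit, norm_mul, norm_mul, norm_exp_I_mul_ofReal, norm_real, mul_one,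
      Real.norm_eq_abs] at h
  calc ‖z - s * exp (I * t)‖ ^ 2
    _ ≤ (‖z‖ * ‖1 - exp (I * (t - z.arg : ℝ))‖ + |‖z‖ - s|) ^ 2 := by gcongr
    _ ≤ 2 * ((‖z‖ * ‖1 - exp (I * (t - z.arg : ℝ))‖) ^ 2 + |‖z‖ - s| ^ 2) := add_sq_le
    _ = _ := by rw [mul_pow, sq_abs, mul_add]

end Phase

section Tripartite

variable {α β γ : Type*} [Fintype α] [Fintype β] [Fintype γ]

/-- The squared error of replacing the phases of the tripartite state `ψ` by `f(a,b) + g(b,c)`. -/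
noncomputable def phaseDefect (ψ : α → β → γ → ℂ) (f : α → β → ℝ) (g : β → γ → ℝ) : ℝ :=
  ∑ a, ∑ b, ∑ c, ‖ψ a b c‖ ^ 2 * ‖1 - exp (I * (f a b + g b c - (ψ a b c).arg : ℝ))‖ ^ 2

/-- The amplitudes of the tripartite state `ψ` as a matrix `Ψ` from the last two factors to the
first one, whose reduced density matrix is `Ψ Ψᴴ`. -/
def amplitudeMatrix (ψ : α → β → γ → ℂ) : Matrix α (β × γ) ℂ :=
  Matrix.of fun a i => ψ a i.1 i.2

variable {ψ : α → β → γ → ℂ}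

theorem vN_amplitudeMatrix_le_of_product [DecidableEq α] [Nonempty β]
    (hψ : ∑ a, ∑ b, ∑ c, ‖ψ a b c‖ ^ 2 = 1) (u : α → β → ℂ) (v : β → γ → ℂ) :
    vN (amplitudeMatrix ψ * (amplitudeMatrix ψ).conjTranspose) ≤
      1 + Real.log (Fintype.card β) +
        (∑ a, ∑ b, ∑ c, ‖ψ a b c - u a b * v b c‖ ^ 2) * Real.log (Fintype.card α) := by
  classical
  have h := vN_mul_conjTranspose_le (M := amplitudeMatrix ψ)
    (by simpa [amplitudeMatrix, Fintype.sum_prod_type] using hψ)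
    (Matrix.of u) (Matrix.of fun b (i : β × γ) => if b = i.1 then v b i.2 else 0)
  simpa [Fintype.sum_prod_type, amplitudeMatrix, Matrix.mul_apply] using h

theorem exists_product_approximation (ψ : α → β → γ → ℂ) (f : α → β → ℝ) (g : β → γ → ℝ) :
    ∃ (u : α → β → ℂ) (v : β → γ → ℂ), ∑ a, ∑ b, ∑ c, ‖ψ a b c - u a b * v b c‖ ^ 2 ≤
      2 * phaseDefect ψ f g + 4 * markovDefect fun a b c => ‖ψ a b c‖ ^ 2 := by
  set p : α → β → γ → ℝ := fun a b c => ‖ψ a b c‖ ^ 2 with hp_def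
  have hp : ∀ a b c, 0 ≤ p a b c := fun _ _ _ => sq_nonneg _
  -- `u = √p(a|b) exp(i f)` and `v = √p(b,c) exp(i g)` have the Markov approximation as `|u v|²`.
  let u a b : ℂ := √((∑ c', p a b c') / ∑ a', ∑ c', p a' b c') * exp (I * f a b)
  let v b c : ℂ := √(∑ a', p a' b c) * exp (I * g b c)
  have huv : ∀ a b c, u a b * v b c = √(markovApprox p a b c) * exp (I * (f a b + g b c : ℝ)) := by
    intro a b c
    rw [markovApprox, Real.sqrt_mul' _ (Finset.sum_nonneg fun _ _ => hp _ _ _)]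
    simp only [u, v]
    push_cast
    rw [mul_add, exp_add]
    ring
  refine ⟨u, v, ?_⟩
  calc ∑ a, ∑ b, ∑ c, ‖ψ a b c - u a b * v b c‖ ^ 2
    _ ≤ ∑ a, ∑ b, ∑ c, (2 * (‖ψ a b c‖ ^ 2 *
          ‖1 - exp (I * (f a b + g b c - (ψ a b c).arg : ℝ))‖ ^ 2) +
        2 * (√(p a b c) - √(markovApprox p a b c)) ^ 2) := by
      gcongr with a _ b _ c
      rw [huv, hp_def, Real.sqrt_sq (norm_nonneg _)]
      exact norm_sub_mul_exp_sq_le _ _ _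
    _ = 2 * phaseDefect ψ f g +
        2 * ∑ a, ∑ b, ∑ c, (√(p a b c) - √(markovApprox p a b c)) ^ 2 := by
      simp only [Finset.sum_add_distrib, ← Finset.mul_sum, phaseDefect]
    _ ≤ _ := by linarith [sum_sq_sqrt_sub_sqrt_markovApprox_le hp]

theorem vN_amplitudeMatrix_le [DecidableEq α] [Nonempty β]
    (hψ : ∑ a, ∑ b, ∑ c, ‖ψ a b c‖ ^ 2 = 1) (f : α → β → ℝ) (g : β → γ → ℝ) :
    vN (amplitudeMatrix ψ * (amplitudeMatrix ψ).conjTranspose) ≤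
      1 + Real.log (Fintype.card β) +
        (2 * phaseDefect ψ f g + 4 * markovDefect fun a b c => ‖ψ a b c‖ ^ 2) *
          Real.log (Fintype.card α) := by
  obtain ⟨u, v, huv⟩ := exists_product_approximation ψ f g
  exact (vN_amplitudeMatrix_le_of_product hψ u v).trans (by gcongr)

theorem phaseDefect_le_two_mul_sqrt (hψ : ∑ a, ∑ b, ∑ c, ‖ψ a b c‖ ^ 2 = 1) (f : α → β → ℝ)
    (g : β → γ → ℝ) : phaseDefect ψ f g ≤ 2 * √(phaseDefect ψ f g) := by
  have hnonneg : 0 ≤ phaseDefect ψ f g := by unfold phaseDefect; positivity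
  have hfour : phaseDefect ψ f g ≤ 2 ^ 2 := by
    calc phaseDefect ψ f g
      _ ≤ ∑ a, ∑ b, ∑ c, ‖ψ a b c‖ ^ 2 * 2 ^ 2 := by
        unfold phaseDefect
        gcongr
        exact norm_one_sub_exp_I_mul_le _
      _ = 2 ^ 2 := by simp only [← Finset.sum_mul, hψ, one_mul]
  calc phaseDefect ψ f g
    _ = √(phaseDefect ψ f g) * √(phaseDefect ψ f g) := (Real.mul_self_sqrt hnonneg).symm
    _ ≤ 2 * √(phaseDefect ψ f g) := by
      gcongr
      exact Real.sqrt_le_iff.mpr ⟨zero_le_two, hfour⟩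

end Tripartite

section Configuration

theorem log_card_configuration {Ω : Type*} [Fintype Ω] (D : Finset (Fin d → ℤ)) :
    Real.log (Fintype.card ({y // y ∈ D} → Ω)) = D.card * Real.log (Fintype.card Ω) := by
  simp

variable {Ω : Type*} [Nonempty Ω] {W A B D E : Finset (Fin d → ℤ)}

theorem resv_glue_left (hD : D ⊆ W) (σ : {y // y ∈ D} → Ω) (τ : {y // y ∈ W \ D} → Ω) :
    resv D (glue hD σ τ) = σ := by
  ext x
  simp [resv, glue, hD x.2]

theorem resv_glue_right (hD : D ⊆ W) (hE : E ⊆ W \ D) (σ : {y // y ∈ D} → Ω)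
    (τ : {y // y ∈ W \ D} → Ω) : resv E (glue hD σ τ) = resv E τ := by
  ext x
  obtain ⟨hW, hD'⟩ := Finset.mem_sdiff.mp (hE x.2)
  simp [resv, glue, hW, hD']

theorem resv_self (σ : {x // x ∈ W} → Ω) : resv W σ = σ := by
  ext x
  simp [resv]

theorem glue_resv (hD : D ⊆ W) (σ : {x // x ∈ W} → Ω) :
    glue hD (resv D σ) (resv (W \ D) σ) = σ := by
  ext x
  simp [resv, glue]

/-- Cutting a configuration on `W` along `D ⊆ W`. -/
noncomputable def glueEquiv (hD : D ⊆ W) :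
    ({y // y ∈ D} → Ω) × ({y // y ∈ W \ D} → Ω) ≃ ({x // x ∈ W} → Ω) where
  toFun i := glue hD i.1 i.2
  invFun σ := (resv D σ, resv (W \ D) σ)
  left_inv i := by
    simp [resv_glue_left, resv_glue_right hD subset_rfl, resv_self]
  right_inv := glue_resv hD

theorem sum_glue [Fintype Ω] {R : Type*} [AddCommMonoid R] (hD : D ⊆ W)
    (f : ({x // x ∈ W} → Ω) → R) : ∑ σ, f σ = ∑ a, ∑ τ, f (glue hD a τ) := by
  rw [← (glueEquiv hD).sum_comp, Fintype.sum_prod_type]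
  rfl

/-- The configuration on `W = A ⊔ B ⊔ C` with given restrictions, where `C = (W ∖ A) ∖ B`. -/
noncomputable def glue₃ {Ω : Type*} (hA : A ⊆ W) (hB : B ⊆ W \ A) (a : {y // y ∈ A} → Ω)
    (b : {y // y ∈ B} → Ω) (c : {y // y ∈ (W \ A) \ B} → Ω) : {x // x ∈ W} → Ω :=
  glue hA a (glue hB b c)

variable (hA : A ⊆ W) (hB : B ⊆ W \ A) (a : {y // y ∈ A} → Ω) (b : {y // y ∈ B} → Ω)
  (c : {y // y ∈ (W \ A) \ B} → Ω)

theorem resv_glue₃_left : resv A (glue₃ hA hB a b c) = a :=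
  resv_glue_left hA a _

theorem resv_glue₃_middle : resv B (glue₃ hA hB a b c) = b := by
  rw [glue₃, resv_glue_right hA hB, resv_glue_left]

theorem resv_glue₃_right : resv ((W \ A) \ B) (glue₃ hA hB a b c) = c := by
  rw [glue₃, resv_glue_right hA Finset.sdiff_subset, resv_glue_right hB subset_rfl, resv_self]

theorem sum_glue₃ [Fintype Ω] {R : Type*} [AddCommMonoid R] (f : ({x // x ∈ W} → Ω) → R) :
    ∑ σ, f σ = ∑ a, ∑ b, ∑ c, f (glue₃ hA hB a b c) := by
  simp only [sum_glue hA, sum_glue hB, glue₃]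

theorem thAG_eq_sqrt_phaseDefect [Fintype Ω] (ψ : ({x // x ∈ W} → Ω) → ℂ)
    (f : ({y // y ∈ A} → Ω) × ({y // y ∈ B} → Ω) → ℝ)
    (g : ({y // y ∈ (W \ A) \ B} → Ω) × ({y // y ∈ B} → Ω) → ℝ) :
    thAG ψ A B ((W \ A) \ B) f g =
      √(phaseDefect (fun a b c => ψ (glue₃ hA hB a b c)) (fun a b => f (a, b))
        fun b c => g (c, b)) := by
  simp only [thAG, phaseDefect, sum_glue₃ hA hB, resv_glue₃_left, resv_glue₃_middle,
    resv_glue₃_right, normSq_eq_norm_sq]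

theorem rhoD_eq_amplitudeMatrix [Fintype Ω] (ψ : ({x // x ∈ W} → Ω) → ℂ) :
    rhoD hA ψ = amplitudeMatrix (fun a b c => ψ (glue₃ hA hB a b c)) *
      (amplitudeMatrix fun a b c => ψ (glue₃ hA hB a b c)).conjTranspose := by
  ext σ σ'
  simp [rhoD, amplitudeMatrix, Matrix.mul_apply, Fintype.sum_prod_type, sum_glue hB, glue₃]

end Configuration

section Marginals

variable {W A B : Finset (Fin d → ℤ)} (p : ({x // x ∈ W} → Ω₀) → ℝ) (hA : A ⊆ W) (hB : B ⊆ W \ A)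
  (a : {y // y ∈ A} → Ω₀) (b : {y // y ∈ B} → Ω₀) (c : {y // y ∈ (W \ A) \ B} → Ω₀)

theorem marg_eq_sum_glue₃ : marg p B b = ∑ a, ∑ c, p (glue₃ hA hB a b c) := by
  simp [marg, sum_glue₃ hA hB, resv_glue₃_middle]

theorem marg2_eq_sum_glue₃_right : marg2 p A B a b = ∑ c, p (glue₃ hA hB a b c) := by
  simp [marg2, sum_glue₃ hA hB, resv_glue₃_left, resv_glue₃_middle, ite_and]

theorem marg2_eq_sum_glue₃_left :
    marg2 p B ((W \ A) \ B) b c = ∑ a, p (glue₃ hA hB a b c) := by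
  simp [marg2, sum_glue₃ hA hB, resv_glue₃_middle, resv_glue₃_right, ite_and]

theorem marg3_eq_glue₃ : marg3 p A B ((W \ A) \ B) a b c = p (glue₃ hA hB a b c) := by
  simp [marg3, sum_glue₃ hA hB, resv_glue₃_left, resv_glue₃_middle, resv_glue₃_right, ite_and]

variable {p}

theorem TVcond_eq_markovDefect (hp : ∀ σ, 0 ≤ p σ) :
    TVcond p A B ((W \ A) \ B) = markovDefect fun a b c => p (glue₃ hA hB a b c) := by
  simp only [TVcond, marg_eq_sum_glue₃ p hA hB, marg2_eq_sum_glue₃_left p hA hB,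
    marg2_eq_sum_glue₃_right p hA hB, marg3_eq_glue₃ p hA hB, Finset.mul_sum,
    mul_max_conditional_sub_eq (p := fun a b c => p (glue₃ hA hB a b c)) fun _ _ _ => hp _]
  exact (Finset.sum_congr rfl fun _ _ => Finset.sum_comm).trans Finset.sum_comm

end Marginals

section ConfigurationEntropy

variable {W A B : Finset (Fin d → ℤ)} (hA : A ⊆ W) {ψ : ({x // x ∈ W} → Ω₀) → ℂ}

theorem vN_rhoD_le_card_mul_log (hψ : ∑ σ, normSq (ψ σ) = 1) :
    vN (rhoD hA ψ) ≤ A.card * Real.log (Fintype.card Ω₀) := by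
  rw [← log_card_configuration]
  refine vN_mul_conjTranspose_le_log_card (M := Matrix.of fun a τ => ψ (glue hA a τ)) ?_
  simpa [sum_glue hA, normSq_eq_norm_sq] using hψ

theorem vN_rhoD_le_thAG (hB : B ⊆ W \ A) (hψ : ∑ σ, normSq (ψ σ) = 1)
    (f : ({y // y ∈ A} → Ω₀) × ({y // y ∈ B} → Ω₀) → ℝ)
    (g : ({y // y ∈ (W \ A) \ B} → Ω₀) × ({y // y ∈ B} → Ω₀) → ℝ) :
    vN (rhoD hA ψ) ≤ 1 + B.card * Real.log (Fintype.card Ω₀) +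
      (4 * TVcond (fun σ => normSq (ψ σ)) A B ((W \ A) \ B) + 4 * thAG ψ A B ((W \ A) \ B) f g) *
        (A.card * Real.log (Fintype.card Ω₀)) := by
  set φ := fun a b c => ψ (glue₃ hA hB a b c)
  have hφ : ∑ a, ∑ b, ∑ c, ‖φ a b c‖ ^ 2 = 1 := by
    simpa only [sum_glue₃ hA hB, normSq_eq_norm_sq] using hψ
  rw [rhoD_eq_amplitudeMatrix hA hB, thAG_eq_sqrt_phaseDefect hA hB,
    TVcond_eq_markovDefect hA hB fun _ => normSq_nonneg _]
  simp only [normSq_eq_norm_sq, ← log_card_configuration]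
  refine (vN_amplitudeMatrix_le hφ (fun a b => f (a, b)) fun b c => g (c, b)).trans ?_
  have hphase := phaseDefect_le_two_mul_sqrt hφ (fun a b => f (a, b)) fun b c => g (c, b)
  refine add_le_add_right (mul_le_mul_of_nonneg_right ?_ (Real.log_natCast_nonneg _)) _
  linarith

theorem vN_rhoD_le_TVcond_add_th (hB : B ⊆ W \ A) (hψ : ∑ σ, normSq (ψ σ) = 1) :
    vN (rhoD hA ψ) ≤ 1 + B.card * Real.log (Fintype.card Ω₀) +
      4 * (TVcond (fun σ => normSq (ψ σ)) A B ((W \ A) \ B) + th ψ A B ((W \ A) \ B)) *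
        (A.card * Real.log (Fintype.card Ω₀)) := by
  set K : ℝ := A.card * Real.log (Fintype.card Ω₀)
  have hK : 0 ≤ 4 * K := by positivity
  suffices h : vN (rhoD hA ψ) - (1 + B.card * Real.log (Fintype.card Ω₀)) -
      4 * K * TVcond (fun σ => normSq (ψ σ)) A B ((W \ A) \ B) ≤
      4 * K * th ψ A B ((W \ A) \ B) by linarith
  simp only [th, Real.mul_iInf_of_nonneg hK]
  exact le_ciInf fun f => le_ciInf fun g => by linarith [vN_rhoD_le_thAG hA hB hψ f g]

end ConfigurationEntropy

section Scale

theorem one_half_le_log {x : ℝ} (hx : 2 ≤ x) : 1 / 2 ≤ Real.log x := by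
  linarith [Real.log_two_gt_d9, Real.log_le_log two_pos hx]

theorem exists_logarithmic_scale {ξ L : ℝ} (hξ : 0 < ξ) (hL : 2 ≤ L) (s : ℝ) :
    ∃ l : ℕ, 1 ≤ l ∧ (l : ℝ) ≤ (ξ * |s| + 4) * Real.log L ∧ L ^ s * Real.exp (-l / ξ) ≤ 1 := by
  have hlog : 1 / 2 ≤ Real.log L := one_half_le_log hL
  refine ⟨⌈ξ * |s| * Real.log L⌉₊ + 1, Nat.le_add_left _ _, ?_, ?_⟩
  · have hceil := Nat.ceil_lt_add_one (a := ξ * |s| * Real.log L) (by positivity)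
    push_cast
    linarith
  · have hceil : ξ * |s| * Real.log L ≤ (⌈ξ * |s| * Real.log L⌉₊ + 1 : ℕ) := by
      push_cast
      linarith [Nat.le_ceil (ξ * |s| * Real.log L)]
    generalize ⌈ξ * |s| * Real.log L⌉₊ + 1 = l at hceil ⊢
    have hexponent : Real.log L * s ≤ l / ξ := by
      rw [le_div_iff₀ hξ]
      calc Real.log L * s * ξ
        _ ≤ Real.log L * |s| * ξ := by gcongr; exact le_abs_self s
        _ ≤ l := by linarith
    rw [Real.rpow_def_of_pos (by linarith), ← Real.exp_add, Real.exp_le_one_iff, neg_div]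
    linarith

variable {W A : Finset (Fin d → ℤ)} {cd : ℝ}

theorem card_bdry_pos_of_lenA_pos (hL : 0 < lenA W A cd) : 0 < (bdry W A).card := by
  rw [Nat.pos_iff_ne_zero]
  intro h
  simp [lenA, h] at hL

theorem card_eq_mul_lenA_mul_card_bdry (hL : 0 < lenA W A cd) :
    (A.card : ℝ) = cd * lenA W A cd * (bdry W A).card := by
  have hne : cd * (bdry W A).card ≠ 0 := fun h => by simp [lenA, h] at hL
  rw [mul_right_comm, lenA, mul_div_cancel₀ _ hne]

theorem com_eq_sdiff_sdiff (W A : Finset (Fin d → ℤ)) (l : ℕ) :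
    com W A l = (W \ A) \ buf W A l :=
  sdiff_sdiff_left.symm

end Scale

section SingleScale

variable {W A : Finset (Fin d → ℤ)} (hA : A ⊆ W) {ψ : ({x // x ∈ W} → Ω₀) → ℂ}
  {cd Cd ξ Cξ s : ℝ} {l : ℕ}

theorem vN_rhoD_le_of_lenA_le (hψ : ∑ σ, normSq (ψ σ) = 1) (hcd : 0 ≤ cd)
    (hL : 0 < lenA W A cd) (hl : lenA W A cd ≤ l) :
    vN (rhoD hA ψ) ≤ cd * l * (bdry W A).card * Real.log (Fintype.card Ω₀) := by
  refine (vN_rhoD_le_card_mul_log hA hψ).trans ?_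
  rw [card_eq_mul_lenA_mul_card_bdry hL]
  gcongr

theorem vN_rhoD_le_of_decay (hψ : ∑ σ, normSq (ψ σ) = 1) (hcd : 0 ≤ cd) (hCξ : 0 ≤ Cξ)
    (hL : 0 < lenA W A cd)
    (hbuf : ((buf W A l).card : ℝ) ≤ Cd * l * (bdry W A).card)
    (hdec : TVcond (fun σ => normSq (ψ σ)) A (buf W A l) (com W A l) +
        th ψ A (buf W A l) (com W A l) ≤ Cξ * lenA W A cd ^ s * Real.exp (-l / ξ))
    (hscale : lenA W A cd ^ (s + 1) * Real.exp (-l / ξ) ≤ 1) :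
    vN (rhoD hA ψ) ≤
      1 + (Cd * l + 4 * Cξ * cd) * (bdry W A).card * Real.log (Fintype.card Ω₀) := by
  set L := lenA W A cd
  have herror : L ^ s * Real.exp (-l / ξ) * L ≤ 1 := by
    rwa [mul_right_comm, ← Real.rpow_add_one hL.ne']
  rw [com_eq_sdiff_sdiff] at hdec
  have hlog : 0 ≤ Real.log (Fintype.card Ω₀) := Real.log_natCast_nonneg _
  calc vN (rhoD hA ψ)
    _ ≤ 1 + Cd * l * (bdry W A).card * Real.log (Fintype.card Ω₀) +
        4 * (Cξ * L ^ s * Real.exp (-l / ξ)) * (A.card * Real.log (Fintype.card Ω₀)) := by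
      refine (vN_rhoD_le_TVcond_add_th hA (B := buf W A l) (Finset.filter_subset _ _) hψ).trans ?_
      gcongr
    _ = 1 + Cd * l * (bdry W A).card * Real.log (Fintype.card Ω₀) +
        4 * Cξ * cd * (bdry W A).card * Real.log (Fintype.card Ω₀) *
          (L ^ s * Real.exp (-l / ξ) * L) := by
      rw [card_eq_mul_lenA_mul_card_bdry hL]; ring
    _ ≤ 1 + Cd * l * (bdry W A).card * Real.log (Fintype.card Ω₀) +
        4 * Cξ * cd * (bdry W A).card * Real.log (Fintype.card Ω₀) * 1 := by
      gcongr
    _ = _ := by ring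

theorem vN_rhoD_le_at_scale (hψ : ∑ σ, normSq (ψ σ) = 1) (hcd : 0 ≤ cd) (hCd : 0 ≤ Cd)
    (hCξ : 0 ≤ Cξ) (hL : 0 < lenA W A cd)
    (hbuf : l ≤ lenA W A cd → ((buf W A l).card : ℝ) ≤ Cd * l * (bdry W A).card)
    (hdec : l ≤ lenA W A cd → TVcond (fun σ => normSq (ψ σ)) A (buf W A l) (com W A l) +
        th ψ A (buf W A l) (com W A l) ≤ Cξ * lenA W A cd ^ s * Real.exp (-l / ξ))
    (hscale : lenA W A cd ^ (s + 1) * Real.exp (-l / ξ) ≤ 1) :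
    vN (rhoD hA ψ) ≤
      1 + ((cd + Cd) * l + 4 * Cξ * cd) * (bdry W A).card * Real.log (Fintype.card Ω₀) := by
  rcases le_total (l : ℝ) (lenA W A cd) with hlL | hLl
  · refine (vN_rhoD_le_of_decay hA hψ hcd hCξ hL (hbuf hlL) (hdec hlL) hscale).trans ?_
    gcongr
    exact le_add_of_nonneg_left hcd
  · calc vN (rhoD hA ψ)
      _ ≤ 0 + ((cd + 0) * l + 0) * (bdry W A).card * Real.log (Fintype.card Ω₀) := by
        simpa using vN_rhoD_le_of_lenA_le hA hψ hcd hL hLl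
      _ ≤ _ := by gcongr <;> positivity

theorem single_scale_bound_general (hψ : ∑ σ, normSq (ψ σ) = 1) (hcd : 0 ≤ cd) (hξ : 0 < ξ)
    (hCξ : 0 ≤ Cξ) (hL : 2 ≤ lenA W A cd)
    (hbuf : ∀ l : ℕ, 1 ≤ l → l ≤ lenA W A cd →
      ((buf W A l).card : ℝ) ≤ Cd * l * (bdry W A).card)
    (hdec : ∀ l : ℕ, 1 ≤ l → l ≤ lenA W A cd →
      TVcond (fun σ => normSq (ψ σ)) A (buf W A l) (com W A l) +
        th ψ A (buf W A l) (com W A l) ≤ Cξ * lenA W A cd ^ s * Real.exp (-l / ξ)) :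
    vN (rhoD hA ψ) ≤
      (2 + ((cd + Cd) * (ξ * |s + 1| + 4) + 8 * Cξ * cd) * Real.log (Fintype.card Ω₀)) *
        (bdry W A).card * Real.log (lenA W A cd) := by
  have hLpos : 0 < lenA W A cd := two_pos.trans_le hL
  have hbdry : (1 : ℝ) ≤ (bdry W A).card := by exact_mod_cast card_bdry_pos_of_lenA_pos hLpos
  have hCd : 0 ≤ Cd := by
    have hvol := hbuf 1 le_rfl (by push_cast; linarith)
    rw [Nat.cast_one, mul_one] at hvol
    exact nonneg_of_mul_nonneg_left ((Nat.cast_nonneg _).trans hvol) (by linarith)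
  obtain ⟨l, hl, hlD, hscale⟩ := exists_logarithmic_scale hξ hL (s + 1)
  set logL := Real.log (lenA W A cd)
  have hlogL : 1 ≤ 2 * logL := by linarith [one_half_le_log hL]
  have hlogν : 0 ≤ Real.log (Fintype.card Ω₀) := Real.log_natCast_nonneg _
  calc vN (rhoD hA ψ)
    _ ≤ 1 * 1 + ((cd + Cd) * l + 4 * Cξ * cd * 1) *
        (bdry W A).card * Real.log (Fintype.card Ω₀) := by
      simpa using vN_rhoD_le_at_scale hA hψ hcd hCd hCξ hLpos (hbuf l hl) (hdec l hl) hscale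
    _ ≤ (bdry W A).card * (2 * logL) +
        ((cd + Cd) * ((ξ * |s + 1| + 4) * logL) + 4 * Cξ * cd * (2 * logL)) *
          (bdry W A).card * Real.log (Fintype.card Ω₀) := by
      gcongr
    _ = _ := by ring

end SingleScale

/-- **Theorem 4.2** (single-scale entanglement bound). -/
theorem single_scale_bound (hd : 1 ≤ d) (hν : 2 ≤ Fintype.card Ω₀)
    (cd Cd ξ Cξ a : ℝ) (hcd : 0 < cd) (hcC : cd ≤ Cd) (hξ : 0 < ξ)
    (hCξ : 0 < Cξ) (ha : 0 < a) :
    ∃ C : ℝ, ∀ (W A : Finset (Fin d → ℤ)) (hA : A ⊆ W)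
      (ψ : ({x // x ∈ W} → Ω₀) → ℂ),
      (∑ σ : {x // x ∈ W} → Ω₀, Complex.normSq (ψ σ)) = 1 →
      regular W A cd Cd →
      2 ≤ lenA W A cd →
      (∀ l : ℕ, 1 ≤ l →
        TVcond (fun σ => Complex.normSq (ψ σ)) A (buf W A l) (com W A l) +
            th ψ A (buf W A l) (com W A l)
          ≤ Cξ * lenA W A cd ^ (2 * a) * Real.exp (-(l : ℝ) / ξ)) →
      vN (rhoD hA ψ) ≤ C * (bdry W A).card * Real.log (lenA W A cd) :=
  ⟨_, fun _ _ hA _ hψ hreg hL hdec =>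
    single_scale_bound_general hA hψ hcd.le hξ hCξ.le hL
      (fun l hl hlL => (hreg.2 l hl hlL).2) fun l hl _ => hdec l hl⟩

end Stmt6
end

section
/- Single-site flip bound (Lemma of Section 6, inequality (6.10)). For any probability mass function p on Ω₀^W, any disjoint A, B ⊆ W and any u ∈ W ∖ (A ∪ B): TV_B(A|{u}) ≤ Σ_{σ_B : p(σ_B)>0} p(σ_B) · Σ_{s, ŝ ∈ Ω₀ with p(σ_B,s)>0 and p(σ_B,ŝ)>0} p(s|σ_B)·p(ŝ|σ_B) · (1/2)·Σ_{σ_A} | p(σ_A | σ_B, σ_u = s) − p(σ_A | σ_B, σ_u = ŝ) |, where p(σ_B, s) denotes the joint marginal probability of the configuration σ_B on B together with the value s at the site u, and p(s|σ_B) := p(σ_B,s)/p(σ_B). -/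
/-!
Statement 14 (Lemma of Section 6, inequality (6.10)): single-site flip bound.
-/

open scoped Classical

namespace Stmt14

variable {Ω₀ W : Type*} [Fintype Ω₀] [DecidableEq Ω₀] [Fintype W] [DecidableEq W]

/-- marginal `p(σ_S)`. -/
noncomputable def marg (p : (W → Ω₀) → ℝ) (S : Finset W)
    (σS : {x // x ∈ S} → Ω₀) : ℝ :=
  ∑ σ : W → Ω₀, if (fun x : {x // x ∈ S} => σ x.1) = σS then p σ else 0

/-- joint marginal `p(σ_S, σ_T)`. -/
noncomputable def marg2 (p : (W → Ω₀) → ℝ) (S T : Finset W)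
    (σS : {x // x ∈ S} → Ω₀) (σT : {x // x ∈ T} → Ω₀) : ℝ :=
  ∑ σ : W → Ω₀,
    if (fun x : {x // x ∈ S} => σ x.1) = σS ∧ (fun x : {x // x ∈ T} => σ x.1) = σT
    then p σ else 0

/-- triple joint marginal `p(σ_S, σ_T, σ_U)`. -/
noncomputable def marg3 (p : (W → Ω₀) → ℝ) (S T U : Finset W)
    (σS : {x // x ∈ S} → Ω₀) (σT : {x // x ∈ T} → Ω₀) (σU : {x // x ∈ U} → Ω₀) : ℝ :=
  ∑ σ : W → Ω₀,
    if (fun x : {x // x ∈ S} => σ x.1) = σS ∧ (fun x : {x // x ∈ T} => σ x.1) = σT ∧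
        (fun x : {x // x ∈ U} => σ x.1) = σU
    then p σ else 0

/-- the conditioned inter-domain correlation `TV_B(A|C)`. -/
noncomputable def TVcond (p : (W → Ω₀) → ℝ) (A B C : Finset W) : ℝ :=
  ∑ σB : {x // x ∈ B} → Ω₀, ∑ σC : {x // x ∈ C} → Ω₀, marg2 p B C σB σC *
    ∑ σA : {x // x ∈ A} → Ω₀,
      max (marg3 p A B C σA σB σC / marg2 p B C σB σC
            - marg2 p A B σA σB / marg p B σB) 0

/-- the joint marginal `p(σ_B, s)` of `σ_B` together with value `s` at site `u`. -/
noncomputable def margBu (p : (W → Ω₀) → ℝ) (B : Finset W)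
    (σB : {x // x ∈ B} → Ω₀) (u : W) (s : Ω₀) : ℝ :=
  marg2 p B {u} σB fun _ => s

/-- the joint marginal `p(σ_A, σ_B, s)`. -/
noncomputable def margABu (p : (W → Ω₀) → ℝ) (A B : Finset W)
    (σA : {x // x ∈ A} → Ω₀) (σB : {x // x ∈ B} → Ω₀) (u : W) (s : Ω₀) : ℝ :=
  marg3 p A B {u} σA σB fun _ => s

/-!
The two laws compared in `TV_B(A|C)`, given `(σ_B, σ_C)` and given `σ_B` alone, have the same mass,
so the positive parts sum to half the `ℓ¹` distance. Given `σ_B`, the second law is the mixture of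
the laws given `(σ_B, τ_C)` with weights `p(τ_C | σ_B)`. Since total variation distance is convex,
it is bounded by its average over an independent copy `τ_C` of `σ_C`. The case `C = {u}` is (6.10).
-/

/-- Total variation distance, for comparing conditional laws on a finite type. No normalisation is
built in: with `x / 0 = 0`, a law conditioned on a null event is the zero function. -/
noncomputable def tvDist {X : Type*} [Fintype X] (μ ν : X → ℝ) : ℝ :=
  (1 / 2) * ∑ x, |μ x - ν x|

section TotalVariation

variable {X S : Type*} [Fintype X] [Fintype S]

theorem sum_max_sub_zero_eq_tvDist {μ ν : X → ℝ} (h : ∑ x, μ x = ∑ x, ν x) :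
    ∑ x, max (μ x - ν x) 0 = tvDist μ ν := by
  have max_zero (y : ℝ) : max y 0 = 1 / 2 * (y + |y|) := by
    simpa using sup_eq_half_smul_add_add_abs_sub' ℝ y 0
  simp only [max_zero, tvDist, ← Finset.mul_sum, Finset.sum_add_distrib, Finset.sum_sub_distrib, h,
    sub_self, zero_add]

theorem tvDist_sum_mul_le {w : S → ℝ} (hw : ∀ s, 0 ≤ w s) (hw_one : ∑ s, w s = 1)
    (μ : X → ℝ) (ν : S → X → ℝ) :
    tvDist μ (fun x => ∑ s, w s * ν s x) ≤ ∑ s, w s * tvDist μ (ν s) := by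
  have jensen (x : X) : |μ x - ∑ s, w s * ν s x| ≤ ∑ s, w s * |μ x - ν s x| := by
    simpa [Real.dist_eq, abs_sub_comm] using
      (convexOn_univ_dist (μ x)).map_sum_le (fun s _ => hw s) hw_one
        (fun s _ => Set.mem_univ (ν s x))
  calc tvDist μ (fun x => ∑ s, w s * ν s x)
      ≤ 1 / 2 * ∑ x, ∑ s, w s * |μ x - ν s x| := by
        unfold tvDist
        gcongr with x
        exact jensen x
    _ = ∑ s, w s * tvDist μ (ν s) := by
        rw [Finset.sum_comm, Finset.mul_sum]
        simp only [tvDist, Finset.mul_sum, mul_left_comm]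

end TotalVariation

section JointWeight

variable {X S : Type*} [Fintype X] [Fintype S] {a : X → S → ℝ} {b : S → ℝ} {c : X → ℝ} {M : ℝ}

theorem div_total_eq_sum_mul_cond (ha : ∀ x s, 0 ≤ a x s) (hb : ∀ s, ∑ x, a x s = b s)
    (hc : ∀ x, ∑ s, a x s = c x) (x : X) :
    c x / M = ∑ s, b s / M * (a x s / b s) := by
  rw [← hc, Finset.sum_div]
  refine Finset.sum_congr rfl fun s _ => ?_
  have a_eq_zero (hs : b s = 0) : a x s = 0 :=
    (Finset.sum_eq_zero_iff_of_nonneg fun y _ => ha y s).1 ((hb s).trans hs) x (Finset.mem_univ x)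
  rw [div_mul_eq_mul_div, mul_div_cancel_of_imp' a_eq_zero]

theorem sum_max_cond_sub_le_tvDist (ha : ∀ x s, 0 ≤ a x s) (hb : ∀ s, ∑ x, a x s = b s)
    (hc : ∀ x, ∑ s, a x s = c x) (hM : ∑ s, b s = M) {s : S} (hs : b s ≠ 0) :
    ∑ x, max (a x s / b s - c x / M) 0 ≤
      ∑ t, b t / M * tvDist (fun x => a x s / b s) (fun x => a x t / b t) := by
  have b_nonneg (t : S) : 0 ≤ b t := hb t ▸ Finset.sum_nonneg fun x _ => ha x t
  have M_pos : 0 < M := hM ▸ Finset.sum_pos' (fun t _ => b_nonneg t)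
    ⟨s, Finset.mem_univ s, (b_nonneg s).lt_of_ne' hs⟩
  have sum_c : ∑ x, c x = M := by
    simp only [← hc, ← hM, ← hb]
    exact Finset.sum_comm
  have same_mass : ∑ x, a x s / b s = ∑ x, c x / M := by
    rw [← Finset.sum_div, ← Finset.sum_div, hb, sum_c, div_self hs, div_self M_pos.ne']
  calc ∑ x, max (a x s / b s - c x / M) 0
      = tvDist (fun x => a x s / b s) (fun x => c x / M) := sum_max_sub_zero_eq_tvDist same_mass
    _ = tvDist (fun x => a x s / b s) (fun x => ∑ t, b t / M * (a x t / b t)) := by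
        simp only [div_total_eq_sum_mul_cond ha hb hc]
    _ ≤ ∑ t, b t / M * tvDist (fun x => a x s / b s) (fun x => a x t / b t) :=
        tvDist_sum_mul_le (fun t => div_nonneg (b_nonneg t) M_pos.le)
          (by rw [← Finset.sum_div, hM, div_self M_pos.ne']) _ _

theorem sum_mul_sum_max_cond_sub_le_tvDist (ha : ∀ x s, 0 ≤ a x s) (hb : ∀ s, ∑ x, a x s = b s)
    (hc : ∀ x, ∑ s, a x s = c x) (hM : ∑ s, b s = M) :
    ∑ s, b s * ∑ x, max (a x s / b s - c x / M) 0 ≤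
      M * ∑ s, ∑ t, b s / M * (b t / M) *
        tvDist (fun x => a x s / b s) (fun x => a x t / b t) := by
  have b_nonneg (s : S) : 0 ≤ b s := hb s ▸ Finset.sum_nonneg fun x _ => ha x s
  have b_eq_zero (hM_zero : M = 0) (s : S) : b s = 0 :=
    (Finset.sum_eq_zero_iff_of_nonneg fun t _ => b_nonneg t).1 (hM.trans hM_zero) s
      (Finset.mem_univ s)
  rw [Finset.mul_sum]
  refine Finset.sum_le_sum fun s _ => ?_
  simp only [mul_assoc, ← Finset.mul_sum]
  rw [← mul_assoc, mul_div_cancel_of_imp' fun hM_zero => b_eq_zero hM_zero s]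
  obtain hs | hs := eq_or_ne (b s) 0
  · simp [hs]
  · exact mul_le_mul_of_nonneg_left (sum_max_cond_sub_le_tvDist ha hb hc hM hs) (b_nonneg s)

end JointWeight

section Marginals

variable (p : (W → Ω₀) → ℝ) (A B C : Finset W)

theorem sum_marg3_left (σB : {x // x ∈ B} → Ω₀) (σC : {x // x ∈ C} → Ω₀) :
    ∑ σA, marg3 p A B C σA σB σC = marg2 p B C σB σC := by
  unfold marg3 marg2
  rw [Finset.sum_comm]
  simp [ite_and]

theorem sum_marg3_right (σA : {x // x ∈ A} → Ω₀) (σB : {x // x ∈ B} → Ω₀) :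
    ∑ σC, marg3 p A B C σA σB σC = marg2 p A B σA σB := by
  unfold marg3 marg2
  rw [Finset.sum_comm]
  simp [ite_and]

theorem sum_marg2_right (σB : {x // x ∈ B} → Ω₀) :
    ∑ σC, marg2 p B C σB σC = marg p B σB := by
  unfold marg2 marg
  rw [Finset.sum_comm]
  simp [ite_and]

variable {p} in
theorem marg3_nonneg (hp : ∀ σ, 0 ≤ p σ) (σA : {x // x ∈ A} → Ω₀) (σB : {x // x ∈ B} → Ω₀)
    (σC : {x // x ∈ C} → Ω₀) : 0 ≤ marg3 p A B C σA σB σC :=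
  Finset.sum_nonneg fun σ _ => ite_nonneg (hp σ) le_rfl

end Marginals

theorem sum_fun_of_unique {ι α M : Type*} [Unique ι] [Fintype ι] [DecidableEq ι] [Fintype α]
    [AddCommMonoid M] (F : (ι → α) → M) : ∑ f, F f = ∑ a, F fun _ => a :=
  ((Equiv.funUnique ι α).symm.sum_comp F).symm

theorem single_site_flip_bound_general (p : (W → Ω₀) → ℝ) (hp : ∀ σ, 0 ≤ p σ)
    (A B C : Finset W) :
    TVcond p A B C ≤
      ∑ σB : {x // x ∈ B} → Ω₀, marg p B σB *
        ∑ σC : {x // x ∈ C} → Ω₀, ∑ τC : {x // x ∈ C} → Ω₀,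
          (marg2 p B C σB σC / marg p B σB) * (marg2 p B C σB τC / marg p B σB) *
            tvDist (fun σA => marg3 p A B C σA σB σC / marg2 p B C σB σC)
              (fun σA => marg3 p A B C σA σB τC / marg2 p B C σB τC) :=
  Finset.sum_le_sum fun σB _ => sum_mul_sum_max_cond_sub_le_tvDist
    (fun σA σC => marg3_nonneg A B C hp σA σB σC) (fun σC => sum_marg3_left p A B C σB σC)
    (fun σA => sum_marg3_right p A B C σA σB) (sum_marg2_right p B C σB)

/-- **Inequality (6.10)**: the single-site flip bound.  All sums may be taken
unrestricted: terms corresponding to `p(σ_B) = 0` or `p(σ_B,s) = 0` carry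
vanishing factors, by the `x/0 = 0` convention. -/
theorem single_site_flip_bound (p : (W → Ω₀) → ℝ)
    (hp0 : ∀ σ, 0 ≤ p σ) (hp1 : ∑ σ : W → Ω₀, p σ = 1)
    (A B : Finset W) (u : W) (hAB : Disjoint A B) (hu : u ∉ A ∪ B) :
    TVcond p A B {u} ≤
      ∑ σB : {x // x ∈ B} → Ω₀, marg p B σB *
        ∑ s : Ω₀, ∑ t : Ω₀,
          (margBu p B σB u s / marg p B σB) * (margBu p B σB u t / marg p B σB) *
            ((1 / 2) * ∑ σA : {x // x ∈ A} → Ω₀,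
              |margABu p A B σA σB u s / margBu p B σB u s -
                margABu p A B σA σB u t / margBu p B σB u t|) := by
  simpa only [sum_fun_of_unique, tvDist, margBu, margABu] using
    single_site_flip_bound_general p hp0 A B {u}

end Stmt14
end

section
/- Fannes-type entropy bound (Proposition A.1). Let ρ and ρ̂ be two n×n complex positive semidefinite Hermitian matrices of trace 1 with ρ ≠ ρ̂. Then |S(ρ) − S(ρ̂)| ≤ (1/2)·‖ρ − ρ̂‖₁ · ( 1 + ln( 2·rank(ρ − ρ̂) / ‖ρ − ρ̂‖₁ ) ). -/
/-!
Statement 17 (Proposition A.1): Fannes-type entropy bound.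
-/

open scoped ComplexOrder

namespace Stmt17

/-- von Neumann entropy of a Hermitian matrix (convention `0·ln 0 = 0`). -/
noncomputable def vN {n : Type*} [Fintype n] [DecidableEq n] (M : Matrix n n ℂ) : ℝ :=
  if h : M.IsHermitian then -∑ i, h.eigenvalues i * Real.log (h.eigenvalues i) else 0

/-- trace norm of a Hermitian matrix: sum of absolute values of eigenvalues. -/
noncomputable def trNorm {n : Type*} [Fintype n] [DecidableEq n] (M : Matrix n n ℂ) : ℝ :=
  if h : M.IsHermitian then ∑ i, |h.eigenvalues i| else 0

/-!
Let `D = ρ - σ` have positive part `D⁺`, let `r = rank D` and `T = tr D⁺ = ‖D‖₁ / 2`, and put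
`τ = σ + D⁺`. By Courant–Fischer the decreasingly ordered eigenvalues of `τ` dominate those of `ρ`
and those of `σ`, while `λ_{i+r}(τ) ≤ λ_i(σ)` because `τ` and `σ` agree on a subspace of
codimension at most `r`. For `a > 0` the concave function `φ_a(x) = -x ln x + (1 + ln a) x` has its
maximum `a` at `x = a`. Since `ρ` and `σ` have the same trace, `S(ρ) - S(σ)` does not change if
`-x ln x` is replaced by `φ_1`, which increases on `[0, 1]`, so that `ρ` may be replaced by
(the truncation at `1` of) `τ`. Passing from `φ_1` to `φ_a` with `a = T / r` costs at most
`T ln (r / T)`, and `∑ φ_a(λ_i(τ)) - φ_a(λ_i(σ)) ≤ r a = T`: beyond `a` the function decreases,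
and below `a` it increases from `0` to `a`, so the shifted domination makes the sum telescope up to
`r` terms, each at most `a`.
-/

section Rayleigh

open Module Submodule RCLike
open scoped InnerProductSpace

variable {𝕜 E : Type*} [RCLike 𝕜] [NormedAddCommGroup E] [InnerProductSpace 𝕜 E]

lemma inner_eq_zero_of_mem_span_image {ι : Type*} {b : ι → E} (hb : Orthonormal 𝕜 b) {s : Set ι}
    {v : E} (hv : v ∈ span 𝕜 (b '' s)) {k : ι} (hk : k ∉ s) : ⟪b k, v⟫_𝕜 = 0 := by
  obtain ⟨l, hl, rfl⟩ := (Finsupp.mem_span_image_iff_linearCombination 𝕜).1 hv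
  exact inner_eq_zero_symm.1 (hb.inner_finsupp_eq_zero hk hl)

lemma finrank_span_image_of_linearIndependent {ι : Type*} {b : ι → E}
    (hb : LinearIndependent 𝕜 b) (s : Finset ι) : finrank 𝕜 (span 𝕜 (b '' s)) = s.card := by
  rw [Set.image_eq_range]
  exact (finrank_span_eq_card (hb.comp _ Subtype.val_injective)).trans (Fintype.card_coe s)

lemma exists_ne_zero_mem_of_two_mul_finrank_lt [FiniteDimensional 𝕜 E] {U V W : Submodule 𝕜 E}
    (h : 2 * finrank 𝕜 E < finrank 𝕜 U + finrank 𝕜 V + finrank 𝕜 W) :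
    ∃ v ≠ 0, v ∈ U ∧ v ∈ V ∧ v ∈ W := by
  have hUV := finrank_sup_add_finrank_inf_eq U V
  have hUVW := finrank_sup_add_finrank_inf_eq (U ⊓ V) W
  have hle_UV := finrank_le (U ⊔ V)
  have hle_UVW := finrank_le (U ⊓ V ⊔ W)
  have hne : U ⊓ V ⊓ W ≠ ⊥ := by
    rw [← one_le_finrank_iff]
    omega
  obtain ⟨v, ⟨⟨hU, hV⟩, hW⟩, hv⟩ := exists_mem_ne_zero_of_ne_bot hne
  exact ⟨v, hv, hU, hV, hW⟩

variable [FiniteDimensional 𝕜 E] {n : ℕ} {S T : E →ₗ[𝕜] E}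

lemma re_inner_apply_self_eq_sum (hT : T.IsSymmetric) (hn : finrank 𝕜 E = n) (v : E) :
    re ⟪T v, v⟫_𝕜 = ∑ k, hT.eigenvalues hn k * ‖⟪hT.eigenvectorBasis hn k, v⟫_𝕜‖ ^ 2 := by
  rw [← (hT.eigenvectorBasis hn).sum_inner_mul_inner, map_sum]
  refine Finset.sum_congr rfl fun k _ => ?_
  rw [hT v, hT.apply_eigenvectorBasis, inner_smul_right, mul_assoc,
    ← inner_conj_symm v, RCLike.conj_mul]
  norm_cast

lemma mul_norm_sq_le_re_inner_apply_self (hT : T.IsSymmetric) (hn : finrank 𝕜 E = n)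
    {s : Set (Fin n)} {c : ℝ} (hc : ∀ k ∈ s, c ≤ hT.eigenvalues hn k) {v : E}
    (hv : v ∈ span 𝕜 (hT.eigenvectorBasis hn '' s)) : c * ‖v‖ ^ 2 ≤ re ⟪T v, v⟫_𝕜 := by
  rw [re_inner_apply_self_eq_sum hT hn, ← (hT.eigenvectorBasis hn).sum_sq_norm_inner_right,
    Finset.mul_sum]
  refine Finset.sum_le_sum fun k _ => ?_
  by_cases hk : k ∈ s
  · exact mul_le_mul_of_nonneg_right (hc k hk) (sq_nonneg _)
  · simp [inner_eq_zero_of_mem_span_image (hT.eigenvectorBasis hn).orthonormal hv hk]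

lemma re_inner_apply_self_le_mul_norm_sq (hT : T.IsSymmetric) (hn : finrank 𝕜 E = n)
    {s : Set (Fin n)} {c : ℝ} (hc : ∀ k ∈ s, hT.eigenvalues hn k ≤ c) {v : E}
    (hv : v ∈ span 𝕜 (hT.eigenvectorBasis hn '' s)) : re ⟪T v, v⟫_𝕜 ≤ c * ‖v‖ ^ 2 := by
  rw [re_inner_apply_self_eq_sum hT hn, ← (hT.eigenvectorBasis hn).sum_sq_norm_inner_right,
    Finset.mul_sum]
  refine Finset.sum_le_sum fun k _ => ?_
  by_cases hk : k ∈ s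
  · exact mul_le_mul_of_nonneg_right (hc k hk) (sq_nonneg _)
  · simp [inner_eq_zero_of_mem_span_image (hT.eigenvectorBasis hn).orthonormal hv hk]

theorem eigenvalues_le_eigenvalues_of_re_inner_le (hS : S.IsSymmetric) (hT : T.IsSymmetric)
    (hn : finrank 𝕜 E = n) {W : Submodule 𝕜 E} (hST : ∀ v ∈ W, re ⟪S v, v⟫_𝕜 ≤ re ⟪T v, v⟫_𝕜)
    {i j : Fin n} (hij : i + n ≤ j + finrank 𝕜 W) :
    hS.eigenvalues hn j ≤ hT.eigenvalues hn i := by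
  obtain ⟨v, hv, hvS, hvT, hvW⟩ : ∃ v ≠ 0,
      v ∈ span 𝕜 (hS.eigenvectorBasis hn '' Finset.Iic j) ∧
      v ∈ span 𝕜 (hT.eigenvectorBasis hn '' Finset.Ici i) ∧ v ∈ W := by
    refine exists_ne_zero_mem_of_two_mul_finrank_lt ?_
    rw [finrank_span_image_of_linearIndependent
        (hS.eigenvectorBasis hn).orthonormal.linearIndependent,
      finrank_span_image_of_linearIndependent
        (hT.eigenvectorBasis hn).orthonormal.linearIndependent, Fin.card_Iic, Fin.card_Ici]
    omega
  refine le_of_mul_le_mul_right ?_ (by positivity : 0 < ‖v‖ ^ 2)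
  calc hS.eigenvalues hn j * ‖v‖ ^ 2
      ≤ re ⟪S v, v⟫_𝕜 := mul_norm_sq_le_re_inner_apply_self hS hn
        (fun k hk => hS.eigenvalues_antitone hn (Finset.mem_Iic.1 hk)) hvS
    _ ≤ re ⟪T v, v⟫_𝕜 := hST v hvW
    _ ≤ hT.eigenvalues hn i * ‖v‖ ^ 2 := re_inner_apply_self_le_mul_norm_sq hT hn
        (fun k hk => hT.eigenvalues_antitone hn (Finset.mem_Ici.1 hk)) hvT

end Rayleigh

section HermitianMatrix

open Module RCLike Matrix
open scoped MatrixOrder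

lemma rank_neg {m n R : Type*} [Fintype n] [CommRing R] (A : Matrix m n R) :
    (-A).rank = A.rank := by
  have hneg : (-A).mulVecLin = -A.mulVecLin := LinearMap.ext fun v => neg_mulVec v A
  rw [Matrix.rank, hneg, LinearMap.range_neg, ← Matrix.rank]

variable {𝕜 n : Type*} [RCLike 𝕜] [Fintype n] [DecidableEq n] {A B : Matrix n n 𝕜}

lemma sum_comp_eigenvalues (hA : A.IsHermitian) {M : Type*} [AddCommMonoid M] (f : ℝ → M) :
    ∑ i, f (hA.eigenvalues i) = ∑ k, f (hA.eigenvalues₀ k) :=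
  Equiv.sum_comp _ fun k => f (hA.eigenvalues₀ k)

lemma sum_eigenvalues_eq_re_trace (hA : A.IsHermitian) :
    ∑ i, hA.eigenvalues i = re A.trace := by
  simp [hA.trace_eq_sum_eigenvalues]

lemma sum_eigenvalues₀_eq_re_trace (hA : A.IsHermitian) :
    ∑ k, hA.eigenvalues₀ k = re A.trace :=
  (sum_comp_eigenvalues hA id).symm.trans (sum_eigenvalues_eq_re_trace hA)

lemma eigenvalues₀_mono (hA : A.IsHermitian) (hB : B.IsHermitian) (hAB : A ≤ B) :
    hA.eigenvalues₀ ≤ hB.eigenvalues₀ := by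
  intro k
  refine eigenvalues_le_eigenvalues_of_re_inner_le (W := ⊤) _ _ _ (fun v _ => ?_) (by simp)
  have h := (isPositive_toEuclideanLin_iff.2 (Matrix.le_iff.1 hAB)).re_inner_nonneg_left v
  rwa [map_sub, LinearMap.sub_apply, inner_sub_left, map_sub, sub_nonneg] at h

lemma finrank_ker_toEuclideanLin_add_rank (A : Matrix n n 𝕜) :
    finrank 𝕜 (LinearMap.ker (toEuclideanLin A)) + A.rank = Fintype.card n := by
  rw [A.rank_eq_finrank_range_toLin (EuclideanSpace.basisFun n 𝕜).toBasis
    (EuclideanSpace.basisFun n 𝕜).toBasis, ← toEuclideanLin_eq_toLin_orthonormal, add_comm,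
    LinearMap.finrank_range_add_finrank_ker, finrank_euclideanSpace]

lemma eigenvalues₀_le_of_add_rank_sub_le (hA : A.IsHermitian) (hB : B.IsHermitian)
    {i j : Fin (Fintype.card n)} (hij : i + (A - B).rank ≤ j) :
    hA.eigenvalues₀ j ≤ hB.eigenvalues₀ i := by
  refine eigenvalues_le_eigenvalues_of_re_inner_le
    (W := LinearMap.ker (toEuclideanLin (A - B))) _ _ _ (fun v hv => ?_) ?_
  · rw [LinearMap.mem_ker, map_sub, LinearMap.sub_apply, sub_eq_zero] at hv
    rw [hv]
  · have := finrank_ker_toEuclideanLin_add_rank (A - B)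
    omega

lemma trace_cfc (hA : A.IsHermitian) (f : ℝ → ℝ) :
    (cfc f A).trace = ∑ i, (f (hA.eigenvalues i) : 𝕜) := by
  rw [hA.cfc_eq, IsHermitian.cfc, Unitary.conjStarAlgAut_apply, trace_mul_cycle]
  simp

lemma rank_cfc_le (hA : A.IsHermitian) {f : ℝ → ℝ} (hf : f 0 = 0) : (cfc f A).rank ≤ A.rank := by
  rw [hA.cfc_eq, IsHermitian.cfc, Unitary.conjStarAlgAut_apply, hA.rank_eq_card_non_zero_eigs]
  refine (rank_mul_le_left _ _).trans ((rank_mul_le_right _ _).trans ?_)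
  rw [rank_diagonal]
  exact Fintype.card_subtype_mono _ _ fun i hi h0 => hi (by simp [h0, hf])

lemma posPart_eq_cfc (A : Matrix n n 𝕜) : A⁺ = cfc (·⁺ : ℝ → ℝ) A := by
  rw [CFC.posPart_def, cfcₙ_eq_cfc]

lemma negPart_eq_cfc (A : Matrix n n 𝕜) : A⁻ = cfc (·⁻ : ℝ → ℝ) A := by
  rw [CFC.negPart_def, cfcₙ_eq_cfc]

lemma eigenvalues_le_one (hA : A.IsHermitian) (h : A ≤ 1) (i : n) : hA.eigenvalues i ≤ 1 :=
  (CFC.le_one_iff A hA).1 h _ (hA.eigenvalues_mem_spectrum_real i)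

lemma eigenvalues₀_mem_Icc (hA : A.IsHermitian) (h0 : 0 ≤ A) (h1 : A ≤ 1)
    (k : Fin (Fintype.card n)) : hA.eigenvalues₀ k ∈ Set.Icc 0 1 := by
  let e : Fin (Fintype.card n) ≃ n := Fintype.equivOfCardEq (Fintype.card_fin _)
  have hk : hA.eigenvalues₀ k = hA.eigenvalues (e k) := by simp [IsHermitian.eigenvalues, e]
  rw [hk]
  exact ⟨(nonneg_iff_posSemidef.1 h0).eigenvalues_nonneg _, eigenvalues_le_one hA h1 _⟩

lemma le_one_of_re_trace_le_one (hA : A.PosSemidef) (htr : re A.trace ≤ 1) : A ≤ 1 := by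
  refine CFC.le_one (R := ℝ) (fun x hx => ?_) hA.1
  obtain ⟨i, rfl⟩ := hA.1.spectrum_real_eq_range_eigenvalues ▸ hx
  calc hA.1.eigenvalues i ≤ ∑ j, hA.1.eigenvalues j :=
        Finset.single_le_sum (fun j _ => hA.eigenvalues_nonneg j) (Finset.mem_univ i)
    _ ≤ 1 := (sum_eigenvalues_eq_re_trace hA.1).trans_le htr

lemma re_trace_posPart_le_rank (hA : A.IsHermitian) (h : A ≤ 1) : re A⁺.trace ≤ A.rank := by
  rw [posPart_eq_cfc, trace_cfc hA, hA.rank_eq_card_non_zero_eigs, Fintype.card_subtype,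
    ← Finset.sum_boole, map_sum]
  refine Finset.sum_le_sum fun i _ => ?_
  split_ifs with h0
  · simpa [posPart_def] using eigenvalues_le_one hA h i
  · simp [not_not.1 h0]

end HermitianMatrix

section RealSequences

open Set Finset
open Real (log negMulLog)

theorem sum_le_sum_add_nsmul_of_shift_le {M : Type*} [AddCommMonoid M] [PartialOrder M]
    [IsOrderedAddMonoid M] {N r : ℕ} {f g : Fin N → M} {c : M} (hf : ∀ j, f j ≤ c)
    (hg : ∀ i, 0 ≤ g i) (hc : 0 ≤ c) (hfg : ∀ i j : Fin N, i + r ≤ j → f j ≤ g i) :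
    ∑ j, f j ≤ ∑ i, g i + r • c := by
  have hhead : ∑ j with j.val < r, f j ≤ r • c :=
    (sum_le_card_nsmul _ _ _ fun j _ => hf j).trans
      (nsmul_le_nsmul_left hc (by simp [Fin.card_filter_val_lt]))
  have htail : ∑ j with ¬ j.val < r, f j ≤ ∑ i, g i := by
    let shift (j : Fin N) : Fin N := ⟨j - r, by omega⟩
    have hinj : Set.InjOn shift {j : Fin N | ¬ j.val < r} := by
      intro i hi j hj hij
      simp only [shift, Fin.mk.injEq, Set.mem_ofPred_eq] at hi hj hij
      omega
    calc ∑ j with ¬ j.val < r, f j ≤ ∑ j with ¬ j.val < r, g (shift j) :=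
          sum_le_sum fun j hj => hfg _ _ (by
            simp only [Finset.mem_filter, Finset.mem_univ, true_and] at hj
            simp only [shift]
            omega)
      _ = ∑ i ∈ Finset.image shift {j | ¬ j.val < r}, g i := by
          rw [sum_image (by simpa using hinj)]
      _ ≤ ∑ i, g i := sum_le_univ_sum_of_nonneg hg
  rw [← sum_filter_add_sum_filter_not _ (fun j : Fin N => j.val < r), add_comm]
  exact add_le_add htail hhead

/-- The concave function `x ↦ -x ln x + (1 + ln a) x`: the entropy function plus the linear term
that moves its maximum to `x = a`, where its value is `a`. -/
noncomputable def tiltedNegMulLog (a x : ℝ) : ℝ := negMulLog x + (1 + log a) * x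

lemma continuous_tiltedNegMulLog (a : ℝ) : Continuous (tiltedNegMulLog a) := by
  unfold tiltedNegMulLog
  fun_prop

lemma hasDerivAt_tiltedNegMulLog (a : ℝ) {x : ℝ} (hx : x ≠ 0) :
    HasDerivAt (tiltedNegMulLog a) (log a - log x) x := by
  convert! (Real.hasDerivAt_negMulLog hx).add ((hasDerivAt_id x).const_mul (1 + log a)) using 1
  ring

lemma monotoneOn_tiltedNegMulLog (a : ℝ) : MonotoneOn (tiltedNegMulLog a) (Icc 0 a) := by
  refine monotoneOn_of_hasDerivWithinAt_nonneg (convex_Icc 0 a)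
    (continuous_tiltedNegMulLog a).continuousOn
    (fun x hx => (hasDerivAt_tiltedNegMulLog a ?_).hasDerivWithinAt) fun x hx => ?_
  all_goals rw [interior_Icc] at hx
  · exact hx.1.ne'
  · exact sub_nonneg.2 (Real.log_le_log hx.1 hx.2.le)

lemma antitoneOn_tiltedNegMulLog {a : ℝ} (ha : 0 < a) :
    AntitoneOn (tiltedNegMulLog a) (Ici a) := by
  refine antitoneOn_of_hasDerivWithinAt_nonpos (convex_Ici a)
    (continuous_tiltedNegMulLog a).continuousOn
    (fun x hx => (hasDerivAt_tiltedNegMulLog a ?_).hasDerivWithinAt) fun x hx => ?_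
  all_goals rw [interior_Ici] at hx
  · exact (ha.trans hx).ne'
  · exact sub_nonpos.2 (Real.log_le_log ha (le_of_lt hx))

lemma tiltedNegMulLog_zero (a : ℝ) : tiltedNegMulLog a 0 = 0 := by simp [tiltedNegMulLog]

lemma tiltedNegMulLog_self (a : ℝ) : tiltedNegMulLog a a = a := by
  simp only [tiltedNegMulLog, negMulLog]
  ring

lemma tiltedNegMulLog_one_eq (a x : ℝ) :
    tiltedNegMulLog 1 x = tiltedNegMulLog a x - log a * x := by
  simp only [tiltedNegMulLog, Real.log_one]
  ring

lemma tiltedNegMulLog_sub_le_min {a q t : ℝ} (ha : 0 < a) (hqt : q ≤ t) :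
    tiltedNegMulLog a t - tiltedNegMulLog a q ≤
      tiltedNegMulLog a (min t a) - tiltedNegMulLog a (min q a) := by
  have ht := fn_min_add_fn_max (tiltedNegMulLog a) t a
  have hq := fn_min_add_fn_max (tiltedNegMulLog a) q a
  have hmax : tiltedNegMulLog a (max t a) ≤ tiltedNegMulLog a (max q a) :=
    antitoneOn_tiltedNegMulLog ha (le_max_right q a) (le_max_right t a) (max_le_max_right a hqt)
  linarith

variable {N r : ℕ} {p q t : Fin N → ℝ}

lemma sum_tiltedNegMulLog_le_of_shift_le {a : ℝ} (ha : 0 < a)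
    (hq : ∀ i, 0 ≤ q i) (hqt : ∀ i, q i ≤ t i) (htq : ∀ i j : Fin N, i + r ≤ j → t j ≤ q i) :
    ∑ i, tiltedNegMulLog a (t i) ≤ ∑ i, tiltedNegMulLog a (q i) + r * a := by
  have hmem {u : Fin N → ℝ} (hu : ∀ i, 0 ≤ u i) (i : Fin N) : min (u i) a ∈ Icc 0 a :=
    ⟨le_min (hu i) ha.le, min_le_right _ _⟩
  have ht (i : Fin N) : 0 ≤ t i := (hq i).trans (hqt i)
  have hmono := monotoneOn_tiltedNegMulLog a
  have hsum_min : ∑ i, tiltedNegMulLog a (min (t i) a) ≤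
      ∑ i, tiltedNegMulLog a (min (q i) a) + r • a := by
    refine sum_le_sum_add_nsmul_of_shift_le (fun j => ?_) (fun i => ?_) ha.le fun i j hij =>
      hmono (hmem ht j) (hmem hq i) (min_le_min_right a (htq i j hij))
    · exact (hmono (hmem ht j) (right_mem_Icc.2 ha.le) (min_le_right _ _)).trans_eq
        (tiltedNegMulLog_self a)
    · exact (tiltedNegMulLog_zero a).symm.trans_le
        (hmono (left_mem_Icc.2 ha.le) (hmem hq i) (hmem hq i).1)
  have hsum_sub := sum_le_sum fun i (_ : i ∈ Finset.univ) => tiltedNegMulLog_sub_le_min ha (hqt i)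
  simp only [sum_sub_distrib] at hsum_sub
  rw [nsmul_eq_mul] at hsum_min
  linarith

theorem sum_tiltedNegMulLog_one_le_of_shift_le {T : ℝ}
    (hq : ∀ i, 0 ≤ q i) (hqt : ∀ i, q i ≤ t i) (htq : ∀ i j : Fin N, i + r ≤ j → t j ≤ q i)
    (hT : 0 < T) (hTr : T ≤ r) (hsum : ∑ i, t i - ∑ i, q i ≤ T) :
    ∑ i, tiltedNegMulLog 1 (t i) ≤ ∑ i, tiltedNegMulLog 1 (q i) + T * (1 + log (r / T)) := by
  have hr : (0 : ℝ) < r := hT.trans_le hTr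
  have ha : 0 < T / r := div_pos hT hr
  have hlog : log (T / r) ≤ 0 := Real.log_nonpos ha.le ((div_le_one hr).2 hTr)
  have hmain := sum_tiltedNegMulLog_le_of_shift_le ha hq hqt htq
  have hlin : -log (T / r) * (∑ i, t i - ∑ i, q i) ≤ -log (T / r) * T :=
    mul_le_mul_of_nonneg_left hsum (neg_nonneg.2 hlog)
  rw [mul_div_cancel₀ _ hr.ne'] at hmain
  rw [← inv_div T (r : ℝ), Real.log_inv]
  simp only [tiltedNegMulLog_one_eq (T / r), sum_sub_distrib, ← mul_sum]
  linarith

theorem sum_negMulLog_sub_le_of_shift_le {T : ℝ}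
    (hp : ∀ i, p i ∈ Set.Icc 0 1) (hq : ∀ i, q i ∈ Set.Icc 0 1) (hpq : ∑ i, p i = ∑ i, q i)
    (hpt : ∀ i, p i ≤ t i) (hqt : ∀ i, q i ≤ t i) (htq : ∀ i j : Fin N, i + r ≤ j → t j ≤ q i)
    (hT : 0 < T) (hTr : T ≤ r) (hsum : ∑ i, t i - ∑ i, q i ≤ T) :
    ∑ i, negMulLog (p i) - ∑ i, negMulLog (q i) ≤ T * (1 + log (r / T)) := by
  have hpmin (i : Fin N) : p i ≤ min (t i) 1 := le_min (hpt i) (hp i).2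
  have hmono : ∑ i, tiltedNegMulLog 1 (p i) ≤ ∑ i, tiltedNegMulLog 1 (min (t i) 1) :=
    sum_le_sum fun i _ => monotoneOn_tiltedNegMulLog 1 (hp i)
      ⟨(hp i).1.trans (hpmin i), min_le_right _ _⟩ (hpmin i)
  have hsum_min : ∑ i, min (t i) 1 - ∑ i, q i ≤ T :=
    (sub_le_sub_right (sum_le_sum fun i _ => min_le_left _ _) _).trans hsum
  have hmain := hmono.trans <| sum_tiltedNegMulLog_one_le_of_shift_le (fun i => (hq i).1)
    (fun i => le_min (hqt i) (hq i).2) (fun i j hij => (min_le_left _ _).trans (htq i j hij))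
    hT hTr hsum_min
  simp only [tiltedNegMulLog, sum_add_distrib, ← mul_sum, hpq] at hmain
  linarith

end RealSequences

section DensityMatrix

open RCLike
open Real (log negMulLog)
open scoped MatrixOrder

variable {n : Type*} [Fintype n] [DecidableEq n] {A ρ σ : Matrix n n ℂ}

lemma vN_eq_sum_negMulLog (hA : A.IsHermitian) : vN A = ∑ k, negMulLog (hA.eigenvalues₀ k) := by
  rw [vN, dif_pos hA, ← sum_comp_eigenvalues hA, ← Finset.sum_neg_distrib]
  simp only [negMulLog, neg_mul]

lemma trNorm_eq_sum_abs_eigenvalues (hA : A.IsHermitian) : trNorm A = ∑ i, |hA.eigenvalues i| :=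
  dif_pos hA

lemma trNorm_pos (hA : A.IsHermitian) (h0 : A ≠ 0) : 0 < trNorm A := by
  obtain ⟨i, hi⟩ := Function.ne_iff.1 (hA.eigenvalues_eq_zero_iff.not.2 h0)
  rw [trNorm_eq_sum_abs_eigenvalues hA]
  exact Finset.sum_pos' (fun _ _ => abs_nonneg _) ⟨i, Finset.mem_univ i, abs_pos.2 hi⟩

lemma trNorm_eq_re_trace_posPart_add_re_trace_negPart (hA : A.IsHermitian) :
    trNorm A = re A⁺.trace + re A⁻.trace := by
  rw [posPart_eq_cfc, negPart_eq_cfc, trace_cfc hA, trace_cfc hA, ← map_add,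
    ← Finset.sum_add_distrib, map_sum, trNorm_eq_sum_abs_eigenvalues hA]
  exact Finset.sum_congr rfl fun i _ => by simp [← posPart_add_negPart]

lemma trNorm_neg (hA : A.IsHermitian) : trNorm (-A) = trNorm A := by
  rw [trNorm_eq_re_trace_posPart_add_re_trace_negPart hA,
    trNorm_eq_re_trace_posPart_add_re_trace_negPart hA.neg, CFC.posPart_neg, CFC.negPart_neg,
    add_comm]

lemma re_trace_posPart_of_trace_eq_zero (hA : A.IsHermitian) (htr : A.trace = 0) :
    re A⁺.trace = 1 / 2 * trNorm A := by
  have hsub : A⁺.trace - A⁻.trace = 0 := by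
    rw [← Matrix.trace_sub, CFC.posPart_sub_negPart A hA, htr]
  rw [trNorm_eq_re_trace_posPart_add_re_trace_negPart hA, ← sub_eq_zero.1 hsub]
  ring

lemma vN_sub_vN_le (hρ₀ : 0 ≤ ρ) (hρ₁ : ρ ≤ 1) (hσ₀ : 0 ≤ σ) (hσ₁ : σ ≤ 1)
    (htr : ρ.trace = σ.trace) (hne : ρ ≠ σ) :
    vN ρ - vN σ ≤
      1 / 2 * trNorm (ρ - σ) * (1 + log (2 * (ρ - σ).rank / trNorm (ρ - σ))) := by
  have hρ := Matrix.nonneg_iff_posSemidef.1 hρ₀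
  have hσ := Matrix.nonneg_iff_posSemidef.1 hσ₀
  have hD : (ρ - σ).IsHermitian := hρ.1.sub hσ.1
  have hT := re_trace_posPart_of_trace_eq_zero hD (by rw [Matrix.trace_sub, htr, sub_self])
  have hpos : 0 < trNorm (ρ - σ) := trNorm_pos hD (sub_ne_zero.2 hne)
  let τ := σ + (ρ - σ)⁺
  have hστ : σ ≤ τ := le_add_of_nonneg_right (CFC.posPart_nonneg _)
  have hρτ : ρ ≤ τ := sub_le_iff_le_add'.1 (CFC.le_posPart hD)
  have hτ : τ.PosSemidef := Matrix.nonneg_iff_posSemidef.1 (hσ₀.trans hστ)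
  have hrank : (τ - σ).rank ≤ (ρ - σ).rank := by
    rw [add_sub_cancel_left, posPart_eq_cfc]
    exact rank_cfc_le hD posPart_zero
  have hTr : 1 / 2 * trNorm (ρ - σ) ≤ (ρ - σ).rank :=
    hT ▸ re_trace_posPart_le_rank hD ((sub_le_self ρ hσ₀).trans hρ₁)
  have hsum : ∑ k, hτ.1.eigenvalues₀ k - ∑ k, hσ.1.eigenvalues₀ k ≤ 1 / 2 * trNorm (ρ - σ) := by
    rw [sum_eigenvalues₀_eq_re_trace, sum_eigenvalues₀_eq_re_trace, ← map_sub, ← Matrix.trace_sub,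
      add_sub_cancel_left, hT]
  have hratio : 2 * (ρ - σ).rank / trNorm (ρ - σ) = (ρ - σ).rank / (1 / 2 * trNorm (ρ - σ)) := by
    field_simp
  rw [vN_eq_sum_negMulLog hρ.1, vN_eq_sum_negMulLog hσ.1, hratio]
  refine sum_negMulLog_sub_le_of_shift_le (t := hτ.1.eigenvalues₀)
    (eigenvalues₀_mem_Icc hρ.1 hρ₀ hρ₁) (eigenvalues₀_mem_Icc hσ.1 hσ₀ hσ₁) ?_
    (eigenvalues₀_mono hρ.1 hτ.1 hρτ) (eigenvalues₀_mono hσ.1 hτ.1 hστ)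
    (fun i j hij => eigenvalues₀_le_of_add_rank_sub_le hτ.1 hσ.1 (by omega))
    (by positivity) hTr hsum
  rw [sum_eigenvalues₀_eq_re_trace, sum_eigenvalues₀_eq_re_trace, htr]

theorem fannes_type_bound_general (hρ₀ : 0 ≤ ρ) (hρ₁ : ρ ≤ 1) (hσ₀ : 0 ≤ σ) (hσ₁ : σ ≤ 1)
    (htr : ρ.trace = σ.trace) (hne : ρ ≠ σ) :
    |vN ρ - vN σ| ≤
      1 / 2 * trNorm (ρ - σ) * (1 + log (2 * (ρ - σ).rank / trNorm (ρ - σ))) := by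
  have hD : (ρ - σ).IsHermitian := (Matrix.nonneg_iff_posSemidef.1 hρ₀).1.sub
    (Matrix.nonneg_iff_posSemidef.1 hσ₀).1
  refine abs_sub_le_iff.2 ⟨vN_sub_vN_le hρ₀ hρ₁ hσ₀ hσ₁ htr hne, ?_⟩
  rw [← trNorm_neg hD, ← rank_neg, neg_sub]
  exact vN_sub_vN_le hσ₀ hσ₁ hρ₀ hρ₁ htr.symm hne.symm

end DensityMatrix

/-- **Proposition A.1** (Fannes-type entropy bound). -/
theorem fannes_type_bound {n : ℕ} (ρ ρh : Matrix (Fin n) (Fin n) ℂ)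
    (hρ : ρ.PosSemidef) (hρh : ρh.PosSemidef)
    (h1 : ρ.trace = 1) (h2 : ρh.trace = 1) (hne : ρ ≠ ρh) :
    |vN ρ - vN ρh| ≤
      (1 / 2) * trNorm (ρ - ρh) *
        (1 + Real.log (2 * ((ρ - ρh).rank : ℝ) / trNorm (ρ - ρh))) :=
  fannes_type_bound_general hρ.nonneg (le_one_of_re_trace_le_one hρ (by simp [h1])) hρh.nonneg
    (le_one_of_re_trace_le_one hρh (by simp [h2])) (h1.trans h2.symm) hne

end Stmt17
end

section
/- Trace subadditivity for the entropy-type function (Lemma A.2). Define F : [0,∞) → [0,∞) by F(x) := x·(1 − ln x) for x ∈ (0,1], F(0) := 0, and F(x) := 1 for x > 1. Then for any two n×n complex positive semidefinite Hermitian matrices A and B: tr F(A+B) ≤ tr F(A) + tr F(B), where for a positive semidefinite Hermitian matrix M, tr F(M) := Σ_i F(λ_i(M)) over the eigenvalues λ_i(M) of M counted with multiplicity. -/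
/-!
Statement 18 (Lemma A.2): trace subadditivity for the entropy-type function.
-/

open scoped ComplexOrder

namespace Stmt18

/-- the entropy-type function `F`. -/
noncomputable def F (x : ℝ) : ℝ :=
  if x ≤ 0 then 0 else if x ≤ 1 then x * (1 - Real.log x) else 1

/-- `tr F(M)` for a Hermitian matrix `M`: the sum of `F` over the eigenvalues. -/
noncomputable def trF {n : Type*} [Fintype n] [DecidableEq n] (M : Matrix n n ℂ) : ℝ :=
  if h : M.IsHermitian then ∑ i, F (h.eigenvalues i) else 0

/-!
Only concavity of `F` on `[0, ∞)` matters (Rotfel'd's inequality); take a concave `f`, normalised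
to `f 0 = 0`. Let `C = A + B` have eigenbasis `v` and eigenvalues `c`, and let `A` have eigenbasis
`u` and eigenvalues `a`. The weights `w i j = a i * |⟨u i, v j⟩|² / c j` satisfy
`∑ j, w i j * c j = a i` and `∑ j, w i j = a i * ⟨u i, C⁻¹ u i⟩ ≤ 1`, the latter because
`a i • u i u i* ≤ A ≤ C`. Jensen's inequality and summation over `i` give
`∑ j, (f (c j) / c j) * ⟨v j, A v j⟩ ≤ tr f(A)`. Adding the same bound for `B` and using
`⟨v j, (A + B) v j⟩ = c j` finishes the proof.
-/

lemma sum_mul_sub_map_zero_le_of_concaveOn {ι V : Type*} [Fintype ι] [AddCommGroup V] [Module ℝ V]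
    {s : Set V} {f : V → ℝ} (hf : ConcaveOn ℝ s f) (h0 : 0 ∈ s) {w : ι → ℝ} {p : ι → V}
    (hw : ∀ j, 0 ≤ w j) (hw1 : ∑ j, w j ≤ 1) (hp : ∀ j, p j ∈ s) :
    ∑ j, w j * (f (p j) - f 0) ≤ f (∑ j, w j • p j) - f 0 := by
  have jensen := hf.map_add_sum_le (t := Finset.univ) (v := 1 - ∑ j, w j) (fun j _ => hw j)
    (by ring) (fun j _ => hp j) (by linarith) h0
  simp only [smul_zero, zero_add, smul_eq_mul] at jensen
  simp only [mul_sub, Finset.sum_sub_distrib, ← Finset.sum_mul]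
  linarith

section DiagonalForm

open scoped InnerProductSpace

variable {𝕜 E ι κ : Type*} [RCLike 𝕜] [NormedAddCommGroup E] [InnerProductSpace 𝕜 E]
  [Fintype ι] [Fintype κ]

lemma inner_mul_inner_swap (x y : E) : ⟪x, y⟫_𝕜 * ⟪y, x⟫_𝕜 = ((‖⟪x, y⟫_𝕜‖ ^ 2 : ℝ) : 𝕜) := by
  rw [← inner_conj_symm y x, RCLike.mul_conj, RCLike.ofReal_pow]

/-- The quadratic form `x ↦ ⟪x, T x⟫` of the operator `T` that is diagonal in the orthonormal basis
`v` with eigenvalues `c`; the Loewner order between such operators is the pointwise order of their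
forms. -/
noncomputable def diagonalForm (v : OrthonormalBasis ι 𝕜 E) (c : ι → ℝ) (x : E) : ℝ :=
  ∑ j, c j * ‖⟪v j, x⟫_𝕜‖ ^ 2

lemma diagonalForm_nonneg (v : OrthonormalBasis ι 𝕜 E) {c : ι → ℝ} (hc : ∀ j, 0 ≤ c j) (x : E) :
    0 ≤ diagonalForm v c x :=
  Finset.sum_nonneg fun j _ => mul_nonneg (hc j) (sq_nonneg _)

lemma diagonalForm_apply_basis (v : OrthonormalBasis ι 𝕜 E) (c : ι → ℝ) (j : ι) :
    diagonalForm v c (v j) = c j := by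
  classical
  simp [diagonalForm, v.inner_eq_ite, apply_ite]

lemma mul_sq_norm_inner_le_diagonalForm (v : OrthonormalBasis ι 𝕜 E) {c : ι → ℝ}
    (hc : ∀ j, 0 ≤ c j) (j : ι) (x : E) :
    c j * ‖⟪v j, x⟫_𝕜‖ ^ 2 ≤ diagonalForm v c x :=
  Finset.single_le_sum (f := fun j => c j * ‖⟪v j, x⟫_𝕜‖ ^ 2)
    (fun j _ => mul_nonneg (hc j) (sq_nonneg _)) (Finset.mem_univ j)

lemma diagonalForm_eq_re_inner_map_self (v : OrthonormalBasis ι 𝕜 E) {c : ι → ℝ} {T : E →ₗ[𝕜] E}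
    (hT : ∀ j, T (v j) = (c j : 𝕜) • v j) (x : E) :
    diagonalForm v c x = RCLike.re ⟪x, T x⟫_𝕜 := by
  have hTx : T x = ∑ j, ⟪v j, x⟫_𝕜 • (c j : 𝕜) • v j := by
    conv_lhs => rw [← v.sum_repr' x]
    simp only [map_sum, map_smul, hT]
  simp only [diagonalForm, hTx, inner_sum, inner_smul_right, map_sum]
  refine Finset.sum_congr rfl fun j _ => ?_
  rw [mul_left_comm, inner_mul_inner_swap, ← RCLike.ofReal_mul, RCLike.ofReal_re]

/-- The hypothesis `h` says `a • e e* ≤ T` for the operator `T` with form `diagonalForm v c`. Since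
`0⁻¹ = 0`, the form `diagonalForm v c⁻¹` is that of the pseudo-inverse of `T`. -/
lemma mul_diagonalForm_inv_le_one (v : OrthonormalBasis ι 𝕜 E) {c : ι → ℝ} {a : ℝ} (ha : 0 ≤ a)
    {e : E} (h : ∀ x, a * ‖⟪e, x⟫_𝕜‖ ^ 2 ≤ diagonalForm v c x) :
    a * diagonalForm v c⁻¹ e ≤ 1 := by
  set s := diagonalForm v c⁻¹ e with hs
  -- the pseudo-inverse applied to `e`, as test vector in `h`
  let y : E := ∑ j, (((c j)⁻¹ : ℝ) * ⟪v j, e⟫_𝕜 : 𝕜) • v j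
  have inner_v_y (j : ι) : ⟪v j, y⟫_𝕜 = ((c j)⁻¹ : ℝ) * ⟪v j, e⟫_𝕜 :=
    v.orthonormal.inner_right_fintype _ j
  have inner_e_y : ⟪e, y⟫_𝕜 = (s : 𝕜) := by
    simp only [y, hs, diagonalForm, inner_sum, inner_smul_right, mul_assoc, inner_mul_inner_swap,
      Pi.inv_apply, RCLike.ofReal_sum, RCLike.ofReal_mul]
  have form_y : diagonalForm v c y = s := by
    refine Finset.sum_congr rfl fun j _ => ?_
    rw [inner_v_y, norm_mul, RCLike.norm_ofReal, mul_pow, sq_abs, Pi.inv_apply]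
    rcases eq_or_ne (c j) 0 with hcj | hcj
    · simp [hcj]
    · field_simp
  have test : a * s ^ 2 ≤ s := by simpa [inner_e_y, form_y] using h y
  have s_nonneg : 0 ≤ s := (mul_nonneg ha (sq_nonneg s)).trans test
  rcases s_nonneg.eq_or_lt with s_zero | s_pos
  · simp [← s_zero]
  · exact le_of_mul_le_mul_right (by linarith) s_pos

lemma sum_mul_sub_map_zero_le_of_rankOne_le (v : OrthonormalBasis ι 𝕜 E) {c : ι → ℝ} {a : ℝ}
    (ha : 0 ≤ a) {e : E} (he : ‖e‖ = 1) (h : ∀ x, a * ‖⟪e, x⟫_𝕜‖ ^ 2 ≤ diagonalForm v c x)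
    {f : ℝ → ℝ} (hf : ConcaveOn ℝ (Set.Ici 0) f) :
    ∑ j, a * ‖⟪e, v j⟫_𝕜‖ ^ 2 / c j * (f (c j) - f 0) ≤ f a - f 0 := by
  have form_nonneg (j : ι) : 0 ≤ a * ‖⟪e, v j⟫_𝕜‖ ^ 2 := mul_nonneg ha (sq_nonneg _)
  have form_le (j : ι) : a * ‖⟪e, v j⟫_𝕜‖ ^ 2 ≤ c j := by
    simpa only [diagonalForm_apply_basis] using h (v j)
  have c_nonneg (j : ι) : 0 ≤ c j := (form_nonneg j).trans (form_le j)
  have sum_weights_le : ∑ j, a * ‖⟪e, v j⟫_𝕜‖ ^ 2 / c j ≤ 1 := by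
    refine le_of_eq_of_le ?_ (mul_diagonalForm_inv_le_one v ha h)
    rw [diagonalForm, Finset.mul_sum]
    refine Finset.sum_congr rfl fun j _ => ?_
    rw [norm_inner_symm, Pi.inv_apply]
    ring
  have weighted_sum : ∑ j, (a * ‖⟪e, v j⟫_𝕜‖ ^ 2 / c j) • c j = a := by
    calc ∑ j, (a * ‖⟪e, v j⟫_𝕜‖ ^ 2 / c j) • c j
      _ = ∑ j, a * ‖⟪e, v j⟫_𝕜‖ ^ 2 := Finset.sum_congr rfl fun j _ =>
          div_mul_cancel_of_imp fun hcj => le_antisymm (hcj ▸ form_le j) (form_nonneg j)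
      _ = a := by rw [← Finset.mul_sum, v.sum_sq_norm_inner_left, he, one_pow, mul_one]
  simpa only [weighted_sum] using sum_mul_sub_map_zero_le_of_concaveOn hf Set.self_mem_Ici
    (fun j => div_nonneg (form_nonneg j) (c_nonneg j)) sum_weights_le c_nonneg

lemma sum_diagonalForm_div_mul_le (u : OrthonormalBasis κ 𝕜 E) (v : OrthonormalBasis ι 𝕜 E)
    {a : κ → ℝ} {c : ι → ℝ} (ha : ∀ i, 0 ≤ a i)
    (h : ∀ x, diagonalForm u a x ≤ diagonalForm v c x)
    {f : ℝ → ℝ} (hf : ConcaveOn ℝ (Set.Ici 0) f) :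
    ∑ j, diagonalForm u a (v j) / c j * (f (c j) - f 0) ≤ ∑ i, (f (a i) - f 0) := by
  simp only [diagonalForm, Finset.sum_div, Finset.sum_mul]
  rw [Finset.sum_comm]
  exact Finset.sum_le_sum fun i _ => sum_mul_sub_map_zero_le_of_rankOne_le v (ha i)
    (u.norm_eq_one i) (fun x => (mul_sq_norm_inner_le_diagonalForm u ha i x).trans (h x)) hf

lemma sum_sub_map_zero_le_of_diagonalForm_eq_add {κ' : Type*} [Fintype κ']
    (u : OrthonormalBasis κ 𝕜 E) (u' : OrthonormalBasis κ' 𝕜 E) (v : OrthonormalBasis ι 𝕜 E)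
    {a : κ → ℝ} {b : κ' → ℝ} {c : ι → ℝ} (ha : ∀ i, 0 ≤ a i) (hb : ∀ i, 0 ≤ b i)
    (h : ∀ x, diagonalForm v c x = diagonalForm u a x + diagonalForm u' b x)
    {f : ℝ → ℝ} (hf : ConcaveOn ℝ (Set.Ici 0) f) :
    ∑ j, (f (c j) - f 0) ≤ ∑ i, (f (a i) - f 0) + ∑ i, (f (b i) - f 0) := by
  calc ∑ j, (f (c j) - f 0)
    _ = ∑ j, diagonalForm v c (v j) / c j * (f (c j) - f 0) := by
        refine Finset.sum_congr rfl fun j _ => ?_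
        rw [diagonalForm_apply_basis]
        rcases eq_or_ne (c j) 0 with hcj | hcj
        · simp [hcj]
        · rw [div_self hcj, one_mul]
    _ = ∑ j, diagonalForm u a (v j) / c j * (f (c j) - f 0) +
          ∑ j, diagonalForm u' b (v j) / c j * (f (c j) - f 0) := by
        simp only [h, add_div, add_mul, Finset.sum_add_distrib]
    _ ≤ _ := add_le_add
        (sum_diagonalForm_div_mul_le u v ha
          (fun x => (h x).symm ▸ le_add_of_nonneg_right (diagonalForm_nonneg u' hb x)) hf)
        (sum_diagonalForm_div_mul_le u' v hb
          (fun x => (h x).symm ▸ le_add_of_nonneg_left (diagonalForm_nonneg u ha x)) hf)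

lemma diagonalForm_eigenvectorBasis [DecidableEq ι] {A : Matrix ι ι 𝕜} (hA : A.IsHermitian)
    (x : EuclideanSpace 𝕜 ι) :
    diagonalForm hA.eigenvectorBasis hA.eigenvalues x =
      RCLike.re ⟪x, Matrix.toEuclideanLin A x⟫_𝕜 := by
  refine diagonalForm_eq_re_inner_map_self _ (fun j => ?_) x
  ext k
  simpa [RCLike.real_smul_eq_coe_mul] using congrFun (hA.mulVec_eigenvectorBasis j) k

end DiagonalForm

theorem trace_subadditivity_general {𝕜 n : Type*} [RCLike 𝕜] [Fintype n] [DecidableEq n]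
    {f : ℝ → ℝ} (hf : ConcaveOn ℝ (Set.Ici 0) f) {A B : Matrix n n 𝕜}
    (hA : A.PosSemidef) (hB : B.PosSemidef) :
    ∑ i, f ((hA.add hB).isHermitian.eigenvalues i) + Fintype.card n * f 0 ≤
      ∑ i, f (hA.isHermitian.eigenvalues i) + ∑ i, f (hB.isHermitian.eigenvalues i) := by
  have sum_sub_le := sum_sub_map_zero_le_of_diagonalForm_eq_add hA.isHermitian.eigenvectorBasis
    hB.isHermitian.eigenvectorBasis (hA.add hB).isHermitian.eigenvectorBasis
    hA.eigenvalues_nonneg hB.eigenvalues_nonneg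
    (c := (hA.add hB).isHermitian.eigenvalues)
    (fun x => by simp only [diagonalForm_eigenvectorBasis, map_add, LinearMap.add_apply,
      inner_add_right]) hf
  simp only [Finset.sum_sub_distrib, Finset.sum_const, Finset.card_univ, nsmul_eq_mul] at sum_sub_le
  linarith

lemma monotoneOn_add_negMulLog :
    MonotoneOn (fun x : ℝ => x + Real.negMulLog x) (Set.Icc 0 1) := by
  refine monotoneOn_of_deriv_nonneg (convex_Icc 0 1)
    (continuous_id.add Real.continuous_negMulLog).continuousOn ?_ ?_ <;>
    rw [interior_Icc]
  · exact fun x hx => (differentiableAt_id.add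
      (Real.differentiableAt_negMulLog hx.1.ne')).differentiableWithinAt
  · intro x hx
    rw [((hasDerivAt_id' x).fun_add (Real.hasDerivAt_negMulLog hx.1.ne')).deriv]
    linarith [Real.log_nonpos hx.1.le hx.2.le]

lemma F_eq_min_add_negMulLog_min {x : ℝ} (hx : 0 ≤ x) :
    F x = min x 1 + Real.negMulLog (min x 1) := by
  rcases hx.eq_or_lt with rfl | hx
  · simp [F]
  rcases le_or_gt x 1 with hx1 | hx1
  · rw [F, if_neg hx.not_ge, if_pos hx1, min_eq_left hx1, Real.negMulLog]
    ring
  · simp [F, hx.not_ge, hx1.not_ge, hx1.le]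

lemma concaveOn_F : ConcaveOn ℝ (Set.Ici 0) F := by
  have image_min : (fun x : ℝ => min x 1) '' Set.Ici 0 = Set.Icc 0 1 := by
    refine Set.Subset.antisymm ?_ fun y hy => ⟨y, hy.1, min_eq_left hy.2⟩
    rintro _ ⟨x, hx, rfl⟩
    exact ⟨le_min hx zero_le_one, min_le_right x 1⟩
  have concave_min : ConcaveOn ℝ (Set.Ici 0) fun x : ℝ => min x 1 :=
    (concaveOn_id (convex_Ici 0)).inf (concaveOn_const 1 (convex_Ici 0))
  have concave_add : ConcaveOn ℝ (Set.Icc 0 1) fun x : ℝ => x + Real.negMulLog x :=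
    (concaveOn_id (convex_Icc 0 1)).add
      (Real.concaveOn_negMulLog.subset Set.Icc_subset_Ici_self (convex_Icc 0 1))
  exact ((image_min ▸ concave_add).comp concave_min (image_min ▸ monotoneOn_add_negMulLog)).congr
    fun x hx => (F_eq_min_add_negMulLog_min hx).symm

/-- **Lemma A.2**: `tr F(A+B) ≤ tr F(A) + tr F(B)` for positive semidefinite
Hermitian matrices `A`, `B`. -/
theorem trace_subadditivity {n : ℕ} (A B : Matrix (Fin n) (Fin n) ℂ)
    (hA : A.PosSemidef) (hB : B.PosSemidef) :
    trF (A + B) ≤ trF A + trF B := by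
  simpa [trF, hA.isHermitian, hB.isHermitian, (hA.add hB).isHermitian, F] using
    trace_subadditivity_general concaveOn_F hA hB

end Stmt18
end

section
/- Concave trace inequality (Remark following Lemma A.2, inequality (A.4)). Let F : [0,∞) → [0,∞) be nondecreasing and concave. Then for any two N×N complex positive semidefinite Hermitian matrices A and B: tr F(A+B) ≤ tr F(A) + N·F( tr(B)/N ), where for a positive semidefinite Hermitian matrix M, tr F(M) := Σ_i F(λ_i(M)) over the eigenvalues λ_i(M) of M counted with multiplicity. -/
/-!
Statement 19 (inequality (A.4)): concave trace inequality.
-/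

open scoped ComplexOrder

namespace Stmt19

/-- `tr F(M)` for a Hermitian matrix `M`: the sum of `F` over the eigenvalues. -/
noncomputable def trF {n : Type*} [Fintype n] [DecidableEq n]
    (F : ℝ → ℝ) (M : Matrix n n ℂ) : ℝ :=
  if h : M.IsHermitian then ∑ i, F (h.eigenvalues i) else 0

/-!
Weyl's monotonicity principle: if `S ≤ T` then `λᵢ(S) ≤ λᵢ(T)` for the decreasingly ordered
eigenvalues, since some `x ≠ 0` lies both in the span of the first `i` eigenvectors of `S` and in
the span of the last `n - i + 1` eigenvectors of `T`. Hence the differences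
`dᵢ := λᵢ(A + B) - λᵢ(A)` are nonnegative, with sum `tr B`. A concave `F` with `F 0 ≥ 0` is
subadditive, so `F (λᵢ(A + B)) ≤ F (λᵢ(A)) + F dᵢ`, and Jensen's inequality bounds `∑ F dᵢ` by
`N F (tr B / N)`.
-/

open Finset Module
open scoped InnerProductSpace

section Concave

variable {𝕜 E β ι : Type*} [Field 𝕜] [LinearOrder 𝕜] [IsStrictOrderedRing 𝕜]
  [AddCommGroup E] [Module 𝕜 E]
  [AddCommGroup β] [PartialOrder β] [IsOrderedAddMonoid β] [Module 𝕜 β] [IsStrictOrderedModule 𝕜 β]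

lemma smul_le_map_smul_of_concaveOn {s : Set E} {f : E → β} (hf : ConcaveOn 𝕜 s f) (hs : 0 ∈ s)
    (h0 : 0 ≤ f 0) {x : E} (hx : x ∈ s) {c : 𝕜} (hc0 : 0 ≤ c) (hc1 : c ≤ 1) :
    c • f x ≤ f (c • x) := by
  have h1c : 0 ≤ 1 - c := sub_nonneg.2 hc1
  calc c • f x ≤ c • f x + (1 - c) • f 0 := le_add_of_nonneg_right (smul_nonneg h1c h0)
    _ ≤ f (c • x + (1 - c) • 0) := hf.2 hx hs hc0 h1c (add_sub_cancel _ _)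
    _ = f (c • x) := by rw [smul_zero, add_zero]

lemma map_add_le_add_of_concaveOn {s : Set 𝕜} {f : 𝕜 → β} (hf : ConcaveOn 𝕜 s f) (hs : 0 ∈ s)
    (h0 : 0 ≤ f 0) {a b : 𝕜} (ha : 0 ≤ a) (hb : 0 ≤ b) (hab : a + b ∈ s) :
    f (a + b) ≤ f a + f b := by
  rcases (add_nonneg ha hb).eq_or_lt with hsum | hsum
  · obtain ⟨rfl, rfl⟩ := (add_eq_zero_iff_of_nonneg ha hb).1 hsum.symm
    simpa using h0
  have chord_le {t : 𝕜} (ht0 : 0 ≤ t) (ht : t ≤ a + b) : (t / (a + b)) • f (a + b) ≤ f t := by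
    simpa [hsum.ne'] using smul_le_map_smul_of_concaveOn hf hs h0 hab
      (div_nonneg ht0 hsum.le) ((div_le_one hsum).2 ht)
  calc f (a + b) = (a / (a + b)) • f (a + b) + (b / (a + b)) • f (a + b) := by
        rw [← add_smul, ← add_div, div_self hsum.ne', one_smul]
    _ ≤ f a + f b := add_le_add (chord_le ha (le_add_of_nonneg_right hb))
        (chord_le hb (le_add_of_nonneg_left ha))

lemma sum_map_le_card_smul_map_average {s : Set E} {f : E → β} (hf : ConcaveOn 𝕜 s f)
    {t : Finset ι} {p : ι → E} (hp : ∀ i ∈ t, p i ∈ s) :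
    ∑ i ∈ t, f (p i) ≤ (#t : 𝕜) • f ((#t : 𝕜)⁻¹ • ∑ i ∈ t, p i) := by
  rcases t.eq_empty_or_nonempty with rfl | ht
  · simp
  have hcard : 0 < (#t : 𝕜) := Nat.cast_pos.2 ht.card_pos
  have jensen := hf.le_map_sum (w := fun _ ↦ (#t : 𝕜)⁻¹) (fun _ _ ↦ (inv_pos.2 hcard).le)
    (by simp [hcard.ne']) hp
  rw [← smul_sum, ← smul_sum] at jensen
  exact (inv_smul_le_iff_of_pos hcard).1 jensen

end Concave

section Weyl

variable {𝕜 E ι : Type*} [RCLike 𝕜] [NormedAddCommGroup E] [InnerProductSpace 𝕜 E] [Fintype ι]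

lemma exists_ne_zero_forall_inner_eq_zero (v : ι → E) (hv : Fintype.card ι < finrank 𝕜 E) :
    ∃ x : E, x ≠ 0 ∧ ∀ i, ⟪v i, x⟫_𝕜 = 0 := by
  have : FiniteDimensional 𝕜 E := .of_finrank_pos (Nat.zero_lt_of_lt hv)
  let coords : E →ₗ[𝕜] ι → 𝕜 := LinearMap.pi fun i ↦ (innerSL 𝕜 (v i)).toLinearMap
  have hker : LinearMap.ker coords ≠ ⊥ := coords.ker_ne_bot_of_finrank_lt (by simpa using hv)
  obtain ⟨x, hx, hx0⟩ := (Submodule.ne_bot_iff _).1 hker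
  exact ⟨x, hx0, fun i ↦ congrFun (LinearMap.mem_ker.1 hx) i⟩

section Eigenbasis

variable {T : E →ₗ[𝕜] E} {b : OrthonormalBasis ι 𝕜 E} {μ : ι → ℝ}

lemma re_inner_map_self_eq_sum (hb : ∀ i, T (b i) = (μ i : 𝕜) • b i) (x : E) :
    RCLike.re ⟪x, T x⟫_𝕜 = ∑ i, μ i * ‖⟪b i, x⟫_𝕜‖ ^ 2 := by
  have hTx : T x = ∑ i, ⟪b i, x⟫_𝕜 • (μ i : 𝕜) • b i := by
    conv_lhs => rw [← b.sum_repr' x]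
    simp only [map_sum, map_smul, hb]
  simp only [hTx, inner_sum, inner_smul_right, map_sum]
  refine sum_congr rfl fun i _ ↦ ?_
  rw [mul_left_comm, RCLike.re_ofReal_mul, ← inner_conj_symm x, RCLike.mul_conj]
  norm_cast

lemma mul_norm_sq_le_re_inner_map_self (hb : ∀ i, T (b i) = (μ i : 𝕜) • b i) {m : ℝ} {x : E}
    (hx : ∀ i, μ i < m → ⟪b i, x⟫_𝕜 = 0) : m * ‖x‖ ^ 2 ≤ RCLike.re ⟪x, T x⟫_𝕜 := by
  rw [re_inner_map_self_eq_sum hb, ← b.sum_sq_norm_inner_right x, mul_sum]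
  refine sum_le_sum fun i _ ↦ ?_
  rcases lt_or_ge (μ i) m with hi | hi
  · simp [hx i hi]
  · gcongr

lemma re_inner_map_self_le_mul_norm_sq (hb : ∀ i, T (b i) = (μ i : 𝕜) • b i) {m : ℝ} {x : E}
    (hx : ∀ i, m < μ i → ⟪b i, x⟫_𝕜 = 0) : RCLike.re ⟪x, T x⟫_𝕜 ≤ m * ‖x‖ ^ 2 := by
  have hneg := mul_norm_sq_le_re_inner_map_self (T := -T) (b := b) (μ := -μ) (m := -m) (x := x)
    (by simp [hb]) fun i hi ↦ hx i (neg_lt_neg_iff.1 hi)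
  simpa using hneg

end Eigenbasis

theorem eigenvalues_le_eigenvalues_of_le [FiniteDimensional 𝕜 E] {S T : E →ₗ[𝕜] E}
    (hS : S.IsSymmetric) (hT : T.IsSymmetric) (hST : S ≤ T) {n : ℕ} (hn : finrank 𝕜 E = n)
    (k : Fin n) : hS.eigenvalues hn k ≤ hT.eigenvalues hn k := by
  let b := hS.eigenvectorBasis hn
  let c := hT.eigenvectorBasis hn
  obtain ⟨x, hx0, hx⟩ := exists_ne_zero_forall_inner_eq_zero (𝕜 := 𝕜)
    (fun i : {i // i ≠ k} ↦ if k < i then b i else c i) (by simp [hn, k.pos])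
  have hxb (i : Fin n) (hi : hS.eigenvalues hn i < hS.eigenvalues hn k) : ⟪b i, x⟫_𝕜 = 0 := by
    have hki : k < i := (hS.eigenvalues_antitone hn).reflect_lt hi
    simpa [hki] using hx ⟨i, hki.ne'⟩
  have hxc (i : Fin n) (hi : hT.eigenvalues hn k < hT.eigenvalues hn i) : ⟪c i, x⟫_𝕜 = 0 := by
    have hik : i < k := (hT.eigenvalues_antitone hn).reflect_lt hi
    simpa [hik.not_gt] using hx ⟨i, hik.ne⟩
  have hquad : RCLike.re ⟪x, S x⟫_𝕜 ≤ RCLike.re ⟪x, T x⟫_𝕜 := by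
    simpa [inner_sub_right] using ((LinearMap.le_def S T).1 hST).re_inner_nonneg_right x
  have hnorm : 0 < ‖x‖ ^ 2 := by positivity
  refine le_of_mul_le_mul_right ?_ hnorm
  calc hS.eigenvalues hn k * ‖x‖ ^ 2
      ≤ RCLike.re ⟪x, S x⟫_𝕜 := mul_norm_sq_le_re_inner_map_self (hS.apply_eigenvectorBasis hn) hxb
    _ ≤ RCLike.re ⟪x, T x⟫_𝕜 := hquad
    _ ≤ hT.eigenvalues hn k * ‖x‖ ^ 2 :=
        re_inner_map_self_le_mul_norm_sq (hT.apply_eigenvectorBasis hn) hxc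

end Weyl

section Matrix

variable {𝕜 n : Type*} [RCLike 𝕜] [Fintype n] [DecidableEq n] {A B : Matrix n n 𝕜}

lemma eigenvalues_le_eigenvalues_of_posSemidef_sub (hA : A.IsHermitian) (hB : B.IsHermitian)
    (hAB : (B - A).PosSemidef) (i : n) : hA.eigenvalues i ≤ hB.eigenvalues i := by
  refine eigenvalues_le_eigenvalues_of_le _ _ ?_ _ _
  rw [LinearMap.le_def, ← map_sub]
  exact Matrix.isPositive_toEuclideanLin_iff.2 hAB

lemma re_trace_eq_sum_eigenvalues (hA : A.IsHermitian) :
    RCLike.re A.trace = ∑ i, hA.eigenvalues i := by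
  simp [hA.trace_eq_sum_eigenvalues]

theorem concave_trace_inequality_general {F : ℝ → ℝ} (hF : ConcaveOn ℝ (Set.Ici 0) F)
    (h0 : 0 ≤ F 0) (hA : A.PosSemidef) (hB : B.PosSemidef) :
    ∑ i, F ((hA.add hB).isHermitian.eigenvalues i) ≤
      ∑ i, F (hA.isHermitian.eigenvalues i) +
        Fintype.card n * F (RCLike.re B.trace / Fintype.card n) := by
  have hAB := (hA.add hB).isHermitian
  let d (i : n) : ℝ := hAB.eigenvalues i - hA.isHermitian.eigenvalues i
  have hd (i : n) : 0 ≤ d i := sub_nonneg.2 <|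
    eigenvalues_le_eigenvalues_of_posSemidef_sub _ _ (by simpa using hB) i
  have sum_d : ∑ i, d i = RCLike.re B.trace := by
    rw [sum_sub_distrib, ← re_trace_eq_sum_eigenvalues, ← re_trace_eq_sum_eigenvalues,
      Matrix.trace_add, map_add, add_sub_cancel_left]
  calc ∑ i, F (hAB.eigenvalues i)
      = ∑ i, F (hA.isHermitian.eigenvalues i + d i) := by simp only [d, add_sub_cancel]
    _ ≤ ∑ i, (F (hA.isHermitian.eigenvalues i) + F (d i)) := sum_le_sum fun i _ ↦
        map_add_le_add_of_concaveOn hF Set.self_mem_Ici h0 (hA.eigenvalues_nonneg i) (hd i)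
          (add_nonneg (hA.eigenvalues_nonneg i) (hd i))
    _ = ∑ i, F (hA.isHermitian.eigenvalues i) + ∑ i, F (d i) := sum_add_distrib
    _ ≤ _ := by
        gcongr
        simpa only [sum_d, smul_eq_mul, inv_mul_eq_div, card_univ] using
          sum_map_le_card_smul_map_average hF (t := univ) fun i _ ↦ hd i

end Matrix

/-- **Inequality (A.4)**: for nondecreasing, concave `F : [0,∞) → [0,∞)` and
positive semidefinite Hermitian `N×N` matrices `A`, `B`,
`tr F(A+B) ≤ tr F(A) + N·F(tr(B)/N)`. -/
theorem concave_trace_inequality {N : ℕ} (F : ℝ → ℝ)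
    (hmono : MonotoneOn F (Set.Ici (0 : ℝ)))
    (hconc : ConcaveOn ℝ (Set.Ici (0 : ℝ)) F)
    (hpos : ∀ x : ℝ, 0 ≤ x → 0 ≤ F x)
    (A B : Matrix (Fin N) (Fin N) ℂ)
    (hA : A.PosSemidef) (hB : B.PosSemidef) :
    trF F (A + B) ≤ trF F A + N * F (B.trace.re / N) := by
  simpa [trF, hA.isHermitian, (hA.add hB).isHermitian] using
    concave_trace_inequality_general hconc (hpos 0 le_rfl) hA hB

end Stmt19
end
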